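/- arXiv:2307.05906 — 14 statements merged into one kernel-verified Lean document; each statement's English description precedes it below -/
import Mathlib

section
/- Let N and d be natural numbers with 2 ≤ N ≤ d + 1. Suppose u⋆, v⋆ : Fin N → EuclideanSpace ℝ (Fin d) satisfy u⋆ = v⋆ and the family (u⋆ i) forms a simplex ETF. Then for every u, v : Fin N → EuclideanSpace ℝ (Fin d) with ‖u i‖ = 1 and ‖v i‖ = 1 for all i, we have L(u⋆, v⋆) ≤ L(u, v); i.e., the symmetric simplex-ETF configuration globally minimizes the full-batch contrastive loss over unit-norm configurations. -/
open scoped RealInnerProductSpace BigOperators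
open Finset

noncomputable def fullLoss {N d : ℕ} (u v : Fin N → EuclideanSpace ℝ (Fin d)) : ℝ :=
  -(1/(N:ℝ)) * ∑ i, Real.log (Real.exp ⟪u i, v i⟫ / ∑ j, Real.exp ⟪u i, v j⟫)
  - (1/(N:ℝ)) * ∑ i, Real.log (Real.exp ⟪v i, u i⟫ / ∑ j, Real.exp ⟪v i, u j⟫)

noncomputable def batchLoss {N d : ℕ} (S : Finset (Fin N))
    (u v : Fin N → EuclideanSpace ℝ (Fin d)) : ℝ :=
  -(1/(S.card : ℝ)) * ∑ i ∈ S, Real.log (Real.exp ⟪u i, v i⟫ / ∑ j ∈ S, Real.exp ⟪u i, v j⟫)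
  - (1/(S.card : ℝ)) * ∑ i ∈ S, Real.log (Real.exp ⟪v i, u i⟫ / ∑ j ∈ S, Real.exp ⟪v i, u j⟫)

def IsSimplexETF {N d : ℕ} (u : Fin N → EuclideanSpace ℝ (Fin d)) : Prop :=
  (∀ i, ‖u i‖ = 1) ∧ ∀ i j, i ≠ j → ⟪u i, u j⟫ = -(1/((N:ℝ) - 1))

def IsSimplexCrossPolytope {N d : ℕ} (u : Fin N → EuclideanSpace ℝ (Fin d)) : Prop :=
  (∀ i, ‖u i‖ = 1) ∧ ∀ i, ∃ j, ⟪u i, u j⟫ = -1 ∧ (∀ j', ⟪u i, u j'⟫ = -1 → j' = j) ∧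
    ∀ k, k ≠ i → k ≠ j → ⟪u i, u k⟫ = 0

def SymmAntipodal {N d : ℕ} (u v : Fin N → EuclideanSpace ℝ (Fin d)) : Prop :=
  u = v ∧ ∀ i, ∃ j, u j = -(u i)

noncomputable def avgBatchLoss {N d : ℕ} (B : ℕ)
    (u v : Fin N → EuclideanSpace ℝ (Fin d)) : ℝ :=
  (1/(N.choose B : ℝ)) * ∑ S ∈ Finset.powersetCard B (Finset.univ : Finset (Fin N)), batchLoss S u v

lemma aux_tangent {N : ℕ} (hN : 2 ≤ N) (x : Fin N → ℝ) (y : Fin N → ℝ) :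
    Real.log (∑ j, Real.exp (y j)) + (∑ j, Real.exp (y j) * (x j - y j)) / (∑ j, Real.exp (y j))
      ≤ Real.log (∑ j, Real.exp (x j)) := by
  have hne : (Finset.univ : Finset (Fin N)).Nonempty := ⟨⟨0, by omega⟩, by simp⟩
  have hZ : 0 < ∑ j, Real.exp (y j) := Finset.sum_pos (fun j _ => Real.exp_pos _) hne
  set Z := ∑ j, Real.exp (y j) with hZd
  set c := (∑ j, Real.exp (y j) * (x j - y j)) / Z with hc
  have hcZ : ∑ j, Real.exp (y j) * (x j - y j) = c * Z := by
    rw [hc, div_mul_cancel₀ _ hZ.ne']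
  rw [← Real.log_exp c, ← Real.log_mul hZ.ne' (Real.exp_pos c).ne']
  apply Real.log_le_log (mul_pos hZ (Real.exp_pos c))
  have key : ∀ j, Real.exp c * (Real.exp (y j) * (x j - y j) + (1 - c) * Real.exp (y j))
      ≤ Real.exp (x j) := by
    intro j
    have h1 := Real.add_one_le_exp (x j - y j - c)
    have h2 : Real.exp (x j) = Real.exp c * Real.exp (y j) * Real.exp (x j - y j - c) := by
      rw [← Real.exp_add, ← Real.exp_add]; congr 1; ring
    rw [h2]
    have h3 := mul_le_mul_of_nonneg_left h1
      (mul_pos (Real.exp_pos c) (Real.exp_pos (y j))).le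
    linarith
  have hs := Finset.sum_le_sum (fun j (_ : j ∈ Finset.univ) => key j)
  rw [← Finset.mul_sum, Finset.sum_add_distrib, ← Finset.mul_sum, hcZ, ← hZd] at hs
  linarith

lemma aux_sum {N : ℕ} (i : Fin N) (b : ℝ) (c : ℝ) (f : ℝ → ℝ) :
    ∑ j : Fin N, f (if j = i then b else c) = f b + ((N : ℝ) - 1) * f c := by
  rw [← Finset.add_sum_erase _ _ (Finset.mem_univ i)]
  rw [Finset.sum_congr rfl (g := fun _ => f c)]
  · have : 1 ≤ N := by have := i.2; omega
    simp [Nat.cast_sub this]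
  · intro j hj
    rw [if_neg (Finset.ne_of_mem_erase hj)]

lemma aux_row {N : ℕ} (hN : 2 ≤ N) (x : Fin N → ℝ) (i : Fin N) (a Z : ℝ)
    (ha : a = -(1/((N:ℝ) - 1))) (hZ : Z = Real.exp 1 + ((N:ℝ) - 1) * Real.exp a) :
    Real.log Z - 1 + Real.exp a / Z * (∑ j, x j - N * x i + N)
      ≤ - Real.log (Real.exp (x i) / ∑ j, Real.exp (x j)) := by
  have hN' : (2:ℝ) ≤ N := by exact_mod_cast hN
  have hN1 : 0 < (N:ℝ) - 1 := by linarith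
  have hZp : 0 < Z := by rw [hZ]; positivity
  have hS : 0 < ∑ j, Real.exp (x j) :=
    Finset.sum_pos (fun j _ => Real.exp_pos _) ⟨i, by simp⟩
  rw [Real.log_div (Real.exp_pos _).ne' hS.ne', Real.log_exp]
  have h := aux_tangent hN x (fun j => if j = i then 1 else a)
  have e1 : ∑ j : Fin N, Real.exp (if j = i then 1 else a) = Z := by
    rw [aux_sum i 1 a Real.exp, hZ]
  have e2 : ∑ j : Fin N, Real.exp (if j = i then 1 else a) * (x j - (if j = i then 1 else a))
      = Z * (x i - 1) + Real.exp a * (∑ j, x j - N * x i + N) := by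
    have hx := Finset.add_sum_erase Finset.univ x (Finset.mem_univ i)
    rw [← Finset.add_sum_erase _ _ (Finset.mem_univ i),
      Finset.sum_congr rfl (g := fun j => Real.exp a * x j - Real.exp a * a)]
    · have : 1 ≤ N := by omega
      rw [← hx, Finset.sum_sub_distrib, ← Finset.mul_sum]
      simp [Nat.cast_sub this]
      have haa : ((N:ℝ) - 1) * a = -1 := by rw [ha]; field_simp
      rw [hZ]
      linear_combination (-Real.exp a) * haa
    · intro j hj
      rw [if_neg (Finset.ne_of_mem_erase hj)]; ring
  simp only [e1, e2] at h
  have : (Z * (x i - 1) + Real.exp a * (∑ j, x j - N * x i + N)) / Z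
    = x i - 1 + Real.exp a / Z * (∑ j, x j - N * x i + N) := by field_simp
  rw [this] at h
  linarith

lemma aux_geom {N d : ℕ} (u v : Fin N → EuclideanSpace ℝ (Fin d))
    (hu : ∀ i, ‖u i‖ = 1) (hv : ∀ i, ‖v i‖ = 1) :
    0 ≤ ∑ i, (∑ j, ⟪u i, v j⟫ - N * ⟪u i, v i⟫ + N) := by
  have h1 : ‖∑ i, (u i - v i)‖ ^ 2 ≤ N * ∑ i, ‖u i - v i‖ ^ 2 := by
    calc ‖∑ i, (u i - v i)‖ ^ 2 ≤ (∑ i, ‖u i - v i‖) ^ 2 := by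
          gcongr; exact norm_sum_le _ _
      _ ≤ _ := by simpa using sq_sum_le_card_mul_sum_sq (s := Finset.univ) (f := fun i => ‖u i - v i‖)
  have h2 : ∀ i, ‖u i - v i‖ ^ 2 = 2 - 2 * ⟪u i, v i⟫ := by
    intro i; rw [norm_sub_sq_real, hu, hv]; ring
  rw [Finset.sum_sub_distrib, norm_sub_sq_real] at h1
  simp only [h2] at h1
  have h3 : ⟪∑ i, u i, ∑ j, v j⟫ = ∑ i, ∑ j, ⟪u i, v j⟫ := by
    rw [sum_inner]; simp only [inner_sum]
  rw [h3, Finset.sum_sub_distrib, ← Finset.mul_sum] at h1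
  rw [Finset.sum_add_distrib, Finset.sum_sub_distrib, ← Finset.mul_sum]
  simp at h1 ⊢
  nlinarith [sq_nonneg ‖∑ i, u i‖, sq_nonneg ‖∑ i, v i‖]

lemma aux_half {N d : ℕ} (hN : 2 ≤ N) (u v : Fin N → EuclideanSpace ℝ (Fin d))
    (hu : ∀ i, ‖u i‖ = 1) (hv : ∀ i, ‖v i‖ = 1) (a Z : ℝ)
    (ha : a = -(1/((N:ℝ) - 1))) (hZ : Z = Real.exp 1 + ((N:ℝ) - 1) * Real.exp a) :
    ∑ i, Real.log (Real.exp ⟪u i, v i⟫ / ∑ j, Real.exp ⟪u i, v j⟫)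
      ≤ N * (1 - Real.log Z) := by
  have hN' : (2:ℝ) ≤ N := by exact_mod_cast hN
  have hN1 : 0 < (N:ℝ) - 1 := by linarith
  have hZp : 0 < Z := by rw [hZ]; positivity
  have h := Finset.sum_le_sum (fun i (_ : i ∈ Finset.univ) =>
    aux_row hN (fun j => ⟪u i, v j⟫) i a Z ha hZ)
  rw [Finset.sum_add_distrib, ← Finset.mul_sum, Finset.sum_neg_distrib] at h
  have hg := mul_nonneg (div_pos (Real.exp_pos a) hZp).le (aux_geom u v hu hv)
  simp only [Finset.sum_const, Finset.card_univ, Fintype.card_fin, nsmul_eq_mul] at h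
  linarith

/-- The symmetric simplex-ETF configuration globally minimizes the full-batch
contrastive loss over unit-norm configurations, when `2 ≤ N ≤ d + 1`. -/
theorem etf_minimizes_fullLoss (N d : ℕ) (hN2 : 2 ≤ N) (hNd : N ≤ d + 1)
    (ustar vstar : Fin N → EuclideanSpace ℝ (Fin d))
    (hsymm : ustar = vstar) (hetf : IsSimplexETF ustar) :
    ∀ u v : Fin N → EuclideanSpace ℝ (Fin d),
      (∀ i, ‖u i‖ = 1) → (∀ i, ‖v i‖ = 1) →
      fullLoss ustar vstar ≤ fullLoss u v := by
  intro u v hu hv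
  subst hsymm
  obtain ⟨hn, ho⟩ := hetf
  have hN' : (2:ℝ) ≤ N := by exact_mod_cast hN2
  have hN1 : 0 < (N:ℝ) - 1 := by linarith
  obtain ⟨a, ha⟩ : ∃ a : ℝ, a = -(1/((N:ℝ) - 1)) := ⟨_, rfl⟩
  obtain ⟨Z, hZ⟩ : ∃ Z : ℝ, Z = Real.exp 1 + ((N:ℝ) - 1) * Real.exp a := ⟨_, rfl⟩
  have hZp : 0 < Z := by rw [hZ]; positivity
  have hs : ∑ i, Real.log (Real.exp ⟪ustar i, ustar i⟫ / ∑ j, Real.exp ⟪ustar i, ustar j⟫)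
      = N * (1 - Real.log Z) := by
    have hi : ∀ i j, ⟪ustar i, ustar j⟫ = if j = i then 1 else a := by
      intro i j
      split_ifs with h
      · subst h; rw [real_inner_self_eq_norm_sq, hn]; norm_num
      · rw [ho i j (Ne.symm h), ha]
    simp only [hi]
    simp only [aux_sum _ 1 a Real.exp, ← hZ]
    simp [Real.log_div (Real.exp_pos 1).ne' hZp.ne']
    ring
  have h1 := aux_half hN2 u v hu hv a Z ha hZ
  have h2 := aux_half hN2 v u hv hu a Z ha hZ
  unfold fullLoss
  rw [hs]
  have hp : 0 ≤ 1 / (N:ℝ) := by positivity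
  have h3 := mul_le_mul_of_nonneg_left h1 hp
  have h4 := mul_le_mul_of_nonneg_left h2 hp
  linarith
end

section
/- Let d ≥ 2 and N = 2d. Suppose (u⋆, v⋆) is symmetric and antipodal with ‖u⋆ i‖ = 1 for all i, and the family (u⋆ i) forms a simplex cross-polytope. Then for every symmetric and antipodal pair (u, v) with ‖u i‖ = ‖v i‖ = 1 for all i, we have L(u⋆, v⋆) ≤ L(u, v); i.e., among symmetric antipodal unit-norm configurations the simplex cross-polytope minimizes the full-batch contrastive loss. -/
open scoped RealInnerProductSpace BigOperators
open Finset

lemma cp_split {N : ℕ} (i j : Fin N) (h : i ≠ j) (f : Fin N → ℝ) :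
    ∑ k, f k = f i + f j + ∑ k ∈ (univ.erase i).erase j, f k := by
  rw [← Finset.add_sum_erase univ f (mem_univ i),
    ← Finset.add_sum_erase (univ.erase i) f (mem_erase.2 ⟨h.symm, mem_univ j⟩)]
  ring

lemma cp_card {N : ℕ} (i j : Fin N) (h : i ≠ j) (c : ℝ) :
    ∑ _k ∈ (univ.erase i).erase j, c = ((N : ℝ) - 2) * c := by
  have := cp_split i j h (fun _ => c)
  simp only [sum_const, card_univ, Fintype.card_fin, nsmul_eq_mul] at this ⊢
  linarith

lemma cp_fullLoss {N d : ℕ} (u : Fin N → EuclideanSpace ℝ (Fin d)) (hu : ∀ i, ‖u i‖ = 1) :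
    fullLoss u u = (2 / (N : ℝ)) * ∑ i, (Real.log (∑ j, Real.exp ⟪u i, u j⟫) - 1) := by
  have h : ∀ i, Real.log (Real.exp ⟪u i, u i⟫ / ∑ j, Real.exp ⟪u i, u j⟫)
      = -(Real.log (∑ j, Real.exp ⟪u i, u j⟫) - 1) := by
    intro i
    have hpos : 0 < ∑ j, Real.exp ⟪u i, u j⟫ :=
      Finset.sum_pos (fun _ _ => Real.exp_pos _) ⟨i, mem_univ i⟩
    rw [Real.log_div (Real.exp_pos _).ne' hpos.ne', Real.log_exp,
      real_inner_self_eq_norm_sq, hu i]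
    ring
  unfold fullLoss
  simp only [h, sum_neg_distrib]
  ring

lemma cp_row {N : ℕ} (i j : Fin N) (h : i ≠ j) (t : Fin N → ℝ) (hi : t i = 1) (hj : t j = -1)
    (Z : ℝ) (hZ : Z = Real.exp 1 + Real.exp (-1) + ((N : ℝ) - 2)) (hZ0 : 0 < Z) :
    Real.log Z + (∑ k, t k) / Z ≤ Real.log (∑ k, Real.exp (t k)) := by
  set s := ∑ k, t k with hs
  set m := s / Z with hm
  have hmZ : m * Z = s := by rw [hm]; field_simp
  have key : ∀ x : ℝ, Real.exp m * (1 + x - m) ≤ Real.exp x := by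
    intro x
    have h1 := Real.add_one_le_exp (x - m)
    have h2 : Real.exp x = Real.exp m * Real.exp (x - m) := by
      rw [← Real.exp_add]; ring_nf
    rw [h2]
    exact mul_le_mul_of_nonneg_left (by linarith) (Real.exp_pos m).le
  have k0 : Real.exp m * (1 - m) ≤ 1 := by simpa using key 0
  have hsum : ∑ k ∈ (univ.erase i).erase j, Real.exp m * (1 + t k - m)
      ≤ ∑ k ∈ (univ.erase i).erase j, Real.exp (t k) := sum_le_sum fun k _ => key (t k)
  have hst := cp_split i j h t
  rw [hi, hj, ← hs] at hst
  have e1 : ∑ k ∈ (univ.erase i).erase j, Real.exp m * (1 + t k - m)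
      = Real.exp m * (((N : ℝ) - 2) * (1 - m) + s) := by
    have : ∀ k, Real.exp m * (1 + t k - m) = Real.exp m * ((1 - m) + t k) := fun k => by ring
    simp only [this]
    rw [← mul_sum, sum_add_distrib, cp_card i j h]
    rw [hst]; ring
  have hmain : Real.exp m * Z ≤ ∑ k, Real.exp (t k) := by
    rw [cp_split i j h (fun k => Real.exp (t k)), hi, hj]
    rw [e1] at hsum
    have a : (Real.exp 1 + Real.exp (-1)) * (Real.exp m * (1 - m))
        ≤ (Real.exp 1 + Real.exp (-1)) * 1 :=
      mul_le_mul_of_nonneg_left k0 (by positivity)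
    have b : Real.exp m * Z = (Real.exp 1 + Real.exp (-1)) * (Real.exp m * (1 - m))
        + Real.exp m * (((N : ℝ) - 2) * (1 - m) + s) := by
      rw [← hmZ, hZ]; ring
    linarith
  have := Real.log_le_log (by positivity) hmain
  rw [Real.log_mul (Real.exp_pos m).ne' hZ0.ne', Real.log_exp] at this
  linarith

/-- Among symmetric antipodal unit-norm configurations with `N = 2d`, the simplex
cross-polytope minimizes the full-batch contrastive loss. -/
theorem crossPolytope_minimizes_fullLoss (d : ℕ) (hd : 2 ≤ d) (N : ℕ) (hN : N = 2 * d)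
    (ustar vstar : Fin N → EuclideanSpace ℝ (Fin d))
    (hsa : SymmAntipodal ustar vstar) (hnorm : ∀ i, ‖ustar i‖ = 1)
    (hcp : IsSimplexCrossPolytope ustar) :
    ∀ u v : Fin N → EuclideanSpace ℝ (Fin d),
      SymmAntipodal u v → (∀ i, ‖u i‖ = 1) → (∀ i, ‖v i‖ = 1) →
      fullLoss ustar vstar ≤ fullLoss u v := by
  obtain ⟨rfl, -⟩ := hsa
  rintro u v ⟨rfl, hanti⟩ hu -
  have hNr : (4 : ℝ) ≤ N := by
    have : 4 ≤ N := by omega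
    exact_mod_cast this
  rw [cp_fullLoss _ hnorm, cp_fullLoss _ hu]
  refine mul_le_mul_of_nonneg_left ?_ (by positivity)
  obtain ⟨Z, hZ⟩ : ∃ Z : ℝ, Z = Real.exp 1 + Real.exp (-1) + ((N : ℝ) - 2) := ⟨_, rfl⟩
  have hZ0 : 0 < Z := by
    have := Real.exp_pos 1
    have := Real.exp_pos (-1)
    linarith
  have hstar : ∀ i, ∑ j, Real.exp ⟪ustar i, ustar j⟫ = Z := by
    intro i
    obtain ⟨j, hj, -, hk⟩ := hcp.2 i
    have hii : ⟪ustar i, ustar i⟫ = 1 := by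
      rw [real_inner_self_eq_norm_sq, hnorm i]; norm_num
    have hij : i ≠ j := by
      rintro rfl
      rw [hii] at hj; norm_num at hj
    rw [cp_split i j hij, hii, hj, hZ]
    have : ∑ k ∈ (univ.erase i).erase j, Real.exp ⟪ustar i, ustar k⟫
        = ∑ k ∈ (univ.erase i).erase j, (1 : ℝ) := by
      refine sum_congr rfl fun k hk' => ?_
      simp only [mem_erase, mem_univ, and_true] at hk'
      rw [hk k hk'.2 hk'.1, Real.exp_zero]
    rw [this, cp_card i j hij, mul_one]
  have hrow : ∀ i, Real.log Z + (∑ k, ⟪u i, u k⟫) / Z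
      ≤ Real.log (∑ k, Real.exp ⟪u i, u k⟫) := by
    intro i
    obtain ⟨j, hj⟩ := hanti i
    have hii : ⟪u i, u i⟫ = 1 := by
      rw [real_inner_self_eq_norm_sq, hu i]; norm_num
    have hij' : ⟪u i, u j⟫ = -1 := by rw [hj, inner_neg_right, hii]
    have hij : i ≠ j := by
      rintro rfl
      rw [hii] at hij'; norm_num at hij'
    exact cp_row i j hij (fun k => ⟪u i, u k⟫) hii hij' Z hZ hZ0
  have hnn : 0 ≤ ∑ i, (∑ k, ⟪u i, u k⟫) / Z := by
    rw [← sum_div]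
    refine div_nonneg ?_ hZ0.le
    have : ∑ i, ∑ k, ⟪u i, u k⟫ = ⟪∑ i, u i, ∑ k, u k⟫ := by
      simp only [sum_inner, inner_sum]
      try exact sum_comm
    rw [this]
    exact real_inner_self_nonneg
  simp only [hstar]
  calc ∑ _i : Fin N, (Real.log Z - 1)
      ≤ ∑ _i : Fin N, (Real.log Z - 1) + ∑ i, (∑ k, ⟪u i, u k⟫) / Z := by linarith
    _ = ∑ i, ((Real.log Z - 1) + (∑ k, ⟪u i, u k⟫) / Z) := by rw [sum_add_distrib]
    _ ≤ _ := sum_le_sum fun i _ => by linarith [hrow i]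
end

section
/- Let 2 ≤ B < N and d ≥ N. There exists no real constant c such that for all u, v : Fin N → EuclideanSpace ℝ (Fin d) with ‖u i‖ = ‖v i‖ = 1 for all i, the average mini-batch loss (1/C(N,B)) Σ_{S ⊆ Fin N, |S| = B} L_S(u,v) equals c · L(u,v). In particular, the average mini-batch contrastive loss is neither identical to the full-batch contrastive loss nor a constant multiple of it. -/
open scoped RealInnerProductSpace BigOperators
open Finset

theorem aux_batch {N d : ℕ} (u v : Fin N → EuclideanSpace ℝ (Fin d)) (a b : ℝ)
    (h : ∀ i j, ⟪u i, v j⟫ = if i = j then a else b) (S : Finset (Fin N)) (hS : 0 < S.card) :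
    batchLoss S u v = -2 * Real.log (Real.exp a / (Real.exp a + ((S.card : ℝ) - 1) * Real.exp b)) := by
  have h' : ∀ i j, ⟪v i, u j⟫ = if i = j then a else b := by
    intro i j
    rw [real_inner_comm, h]
    simp only [eq_comm]
  have hs : ∀ i ∈ S, ∑ j ∈ S, Real.exp (if i = j then a else b)
      = Real.exp a + ((S.card : ℝ) - 1) * Real.exp b := by
    intro i hi
    rw [← Finset.add_sum_erase S _ hi, if_pos rfl]
    rw [Finset.sum_congr rfl (g := fun _ => Real.exp b)
      (fun j hj => by rw [if_neg (Finset.ne_of_mem_erase hj).symm])]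
    rw [Finset.sum_const, Finset.card_erase_of_mem hi, nsmul_eq_mul, Nat.cast_sub hS, Nat.cast_one]
  unfold batchLoss
  simp only [h, h', if_true]
  have hc : ∑ i ∈ S, Real.log (Real.exp (if i = i then a else b) /
      ∑ j ∈ S, Real.exp (if i = j then a else b))
      = S.card * Real.log (Real.exp a / (Real.exp a + ((S.card : ℝ) - 1) * Real.exp b)) := by
    rw [Finset.sum_congr rfl (fun i hi => by rw [hs i hi, if_pos rfl]), Finset.sum_const, nsmul_eq_mul]
  simp only [if_true] at hc
  rw [hc]
  have : (S.card : ℝ) ≠ 0 := by positivity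
  field_simp
  ring

theorem aux_avg {N d : ℕ} (B : ℕ) (hB : 0 < B) (hBN : B < N)
    (u v : Fin N → EuclideanSpace ℝ (Fin d)) (a b : ℝ)
    (h : ∀ i j, ⟪u i, v j⟫ = if i = j then a else b) :
    avgBatchLoss B u v = -2 * Real.log (Real.exp a / (Real.exp a + ((B : ℝ) - 1) * Real.exp b)) := by
  unfold avgBatchLoss
  rw [Finset.sum_congr rfl (g := fun _ =>
    -2 * Real.log (Real.exp a / (Real.exp a + ((B : ℝ) - 1) * Real.exp b)))]
  · rw [Finset.sum_const, Finset.card_powersetCard, Finset.card_univ, Fintype.card_fin, nsmul_eq_mul]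
    have : (N.choose B : ℝ) ≠ 0 := by exact_mod_cast (Nat.choose_pos hBN.le).ne'
    field_simp
  · intro S hS
    have hc := (Finset.mem_powersetCard.1 hS).2
    rw [aux_batch u v a b h S (by omega), hc]

theorem aux_full {N d : ℕ} (hN : 0 < N)
    (u v : Fin N → EuclideanSpace ℝ (Fin d)) (a b : ℝ)
    (h : ∀ i j, ⟪u i, v j⟫ = if i = j then a else b) :
    fullLoss u v = -2 * Real.log (Real.exp a / (Real.exp a + ((N : ℝ) - 1) * Real.exp b)) := by
  have := aux_batch u v a b h Finset.univ (by simpa using hN)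
  rw [Finset.card_univ, Fintype.card_fin] at this
  rw [← this]
  simp [fullLoss, batchLoss]

theorem aux_log1 (x : ℝ) :
    Real.log (Real.exp 1 / (Real.exp 1 + (x - 1) * Real.exp 1)) = - Real.log x := by
  rw [← Real.log_inv]
  congr 1
  have := (Real.exp_pos 1).ne'
  rw [show Real.exp 1 + (x - 1) * Real.exp 1 = x * Real.exp 1 by ring, div_mul_cancel_right₀ this]

theorem aux_log2 (x : ℝ) :
    Real.log (Real.exp 1 / (Real.exp 1 + (x - 1) * Real.exp 0))
      = - Real.log ((Real.exp 1)⁻¹ * x + (1 - (Real.exp 1)⁻¹) * 1) := by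
  rw [← Real.log_inv]
  congr 1
  have := (Real.exp_pos 1).ne'
  rw [Real.exp_zero, ← inv_div]
  congr 1
  field_simp
  ring

theorem aux_ineq (x y t : ℝ) (hx : 1 < x) (hxy : x < y) (ht : 0 < t) (ht1 : t < 1) :
    Real.log (t * x + (1 - t) * 1) < Real.log x / Real.log y * Real.log (t * y + (1 - t) * 1) := by
  have hlx : 0 < Real.log x := Real.log_pos hx
  have hlxy : Real.log x < Real.log y := Real.log_lt_log (by linarith) hxy
  have hly : 0 < Real.log y := by linarith
  have hl0 : 0 < Real.log x / Real.log y := by positivity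
  have hl1 : Real.log x / Real.log y < 1 := by rw [div_lt_one hly]; exact hlxy
  have key := (Real.strictConcaveOn_rpow hl0 hl1).2 (x := y) (y := 1)
    (by simp; linarith) (by simp) (by linarith) ht (by linarith : 0 < 1 - t) (by ring)
  simp only [smul_eq_mul, Real.one_rpow] at key
  have hyx : y ^ (Real.log x / Real.log y) = x := by
    rw [Real.rpow_def_of_pos (by linarith), mul_div_cancel₀ _ hly.ne', Real.exp_log (by linarith)]
  rw [hyx] at key
  have h1 : 0 < t * y + (1 - t) * 1 := by nlinarith
  have h2 : 0 < t * x + (1 - t) * 1 := by nlinarith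
  rw [← Real.log_rpow h1]
  exact Real.log_lt_log h2 key

/-- The average mini-batch contrastive loss is neither identical to the full-batch
contrastive loss nor a constant multiple of it, over unit-norm configurations. -/
theorem no_constant_relating_avg_and_full (N B d : ℕ) (hB : 2 ≤ B) (hBN : B < N)
    (hd : N ≤ d) :
    ¬ ∃ c : ℝ, ∀ u v : Fin N → EuclideanSpace ℝ (Fin d),
      (∀ i, ‖u i‖ = 1) → (∀ i, ‖v i‖ = 1) →
      avgBatchLoss B u v = c * fullLoss u v := by
  rintro ⟨c, hc⟩
  have hx : (1 : ℝ) < B := by exact_mod_cast (by omega : 1 < B)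
  have hxy : (B : ℝ) < N := by exact_mod_cast hBN
  have hly : 0 < Real.log N := Real.log_pos (by linarith)
  let f : Fin N → EuclideanSpace ℝ (Fin d) := fun i => EuclideanSpace.single (Fin.castLE hd i) 1
  have hf : ∀ i, ‖f i‖ = 1 := by intro i; simp [f]
  have hfi : ∀ i j, ⟪f i, f j⟫ = if i = j then (1 : ℝ) else 0 := by
    intro i j
    simp [f, EuclideanSpace.inner_single_left, Fin.ext_iff]
  let z : Fin N := ⟨0, by omega⟩
  let g : Fin N → EuclideanSpace ℝ (Fin d) := fun _ => f z
  have hgi : ∀ i j, ⟪g i, g j⟫ = if i = j then (1 : ℝ) else 1 := by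
    intro i j
    simp [g, hf]
  have e1 := hc g g (fun _ => hf z) (fun _ => hf z)
  have e2 := hc f f hf hf
  rw [aux_avg B (by omega) hBN g g _ _ hgi, aux_full (by omega) g g _ _ hgi, aux_log1, aux_log1] at e1
  rw [aux_avg B (by omega) hBN f f _ _ hfi, aux_full (by omega) f f _ _ hfi, aux_log2, aux_log2] at e2
  have hcv : Real.log B / Real.log N = c := by
    rw [div_eq_iff hly.ne']; linarith
  have := aux_ineq B N (Real.exp 1)⁻¹ hx hxy (by positivity)
    (inv_lt_one_of_one_lt₀ (by simp))
  rw [hcv] at this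
  linarith
end

section
/- Let 3 ≤ N ≤ d + 1 and B = 2. Let 𝒮 be a nonempty collection of two-element subsets of Fin N that is a strict subcollection, i.e., there exist distinct indices a, b ∈ Fin N with {a,b} ∉ 𝒮. Then for any pair (u⋆, v⋆) with u⋆ = v⋆ whose family (u⋆ i) forms a simplex ETF, there exist u, v : Fin N → EuclideanSpace ℝ (Fin d) with ‖u i‖ = ‖v i‖ = 1 for all i such that Σ_{S ∈ 𝒮} L_S(u,v) < Σ_{S ∈ 𝒮} L_S(u⋆,v⋆). Consequently the symmetric simplex-ETF configuration (the full-batch minimizer) does not minimize the mini-batch loss summed over 𝒮. -/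
open scoped RealInnerProductSpace BigOperators
open Finset

lemma batchLoss_pair {N d : ℕ} (u : Fin N → EuclideanSpace ℝ (Fin d)) (hu : ∀ i, ‖u i‖ = 1)
    (i j : Fin N) (hij : i ≠ j) :
    batchLoss {i, j} u u = -2 + 2 * Real.log (Real.exp 1 + Real.exp ⟪u i, u j⟫) := by
  have h1 : ∀ k, ⟪u k, u k⟫ = (1:ℝ) := fun k => by
    rw [real_inner_self_eq_norm_sq, hu]; norm_num
  have hp : Real.exp 1 + Real.exp ⟪u i, u j⟫ ≠ 0 := by positivity
  unfold batchLoss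
  rw [Finset.card_pair hij]
  simp only [Finset.sum_pair hij, h1, real_inner_comm (u i) (u j)]
  rw [add_comm (Real.exp ⟪u i, u j⟫) (Real.exp 1), Real.log_div (Real.exp_ne_zero _) hp, Real.log_exp]
  push_cast
  ring

lemma exists_touching {N : ℕ} (𝒮 : Finset (Finset (Fin N))) (hne : 𝒮.Nonempty)
    (hcard : ∀ S ∈ 𝒮, S.card = 2)
    (hstrict : ∃ a b : Fin N, a ≠ b ∧ ({a, b} : Finset (Fin N)) ∉ 𝒮) :
    ∃ a b c : Fin N, a ≠ b ∧ c ≠ a ∧ c ≠ b ∧ ({a, b} : Finset (Fin N)) ∉ 𝒮 ∧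
      ({a, c} : Finset (Fin N)) ∈ 𝒮 := by
  obtain ⟨a, b, hab, hS⟩ := hstrict
  obtain ⟨S, hSm⟩ := hne
  obtain ⟨i, j, hij, rfl⟩ := Finset.card_eq_two.1 (hcard S hSm)
  by_cases hai : a = i
  · subst hai
    exact ⟨a, b, j, hab, hij.symm, fun h => hS (h ▸ hSm), hS, hSm⟩
  by_cases h : ({a, i} : Finset (Fin N)) ∈ 𝒮
  · exact ⟨a, b, i, hab, Ne.symm hai, fun h' => hS (h' ▸ h), hS, h⟩
  · refine ⟨i, a, j, Ne.symm hai, hij.symm, ?_, by rwa [Finset.pair_comm], hSm⟩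
    rintro rfl
    exact h (by rwa [Finset.pair_comm])

/-- For `B = 2` and `3 ≤ N ≤ d + 1`: if a nonempty collection of two-element
mini-batches misses some pair `{a, b}`, then the symmetric simplex-ETF configuration
does not minimize the mini-batch loss summed over the collection. -/
theorem etf_not_minimizer_of_strict_subcollection (N d : ℕ) (hN3 : 3 ≤ N) (hNd : N ≤ d + 1)
    (𝒮 : Finset (Finset (Fin N))) (hne : 𝒮.Nonempty)
    (hcard : ∀ S ∈ 𝒮, S.card = 2)
    (hstrict : ∃ a b : Fin N, a ≠ b ∧ ({a, b} : Finset (Fin N)) ∉ 𝒮)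
    (ustar vstar : Fin N → EuclideanSpace ℝ (Fin d))
    (hsymm : ustar = vstar) (hetf : IsSimplexETF ustar) :
    ∃ u v : Fin N → EuclideanSpace ℝ (Fin d),
      (∀ i, ‖u i‖ = 1) ∧ (∀ i, ‖v i‖ = 1) ∧
      ∑ S ∈ 𝒮, batchLoss S u v < ∑ S ∈ 𝒮, batchLoss S ustar vstar := by
  subst hsymm
  obtain ⟨hn, hin⟩ := hetf
  obtain ⟨a, b, c, hab, hca, hcb, hS, hac⟩ := exists_touching 𝒮 hne hcard hstrict
  have hN : (3:ℝ) ≤ N := by exact_mod_cast hN3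
  obtain ⟨q, hq⟩ : ∃ q : ℝ, q = 1 / ((N:ℝ) - 1) := ⟨_, rfl⟩
  rw [← hq] at hin
  have hq0 : 0 < q := by rw [hq]; apply one_div_pos.2; linarith
  have hq1 : q ≤ 1 / 2 := by
    rw [hq]; apply one_div_le_one_div_of_le <;> linarith
  obtain ⟨r, hr⟩ : ∃ r : ℝ, r = ‖ustar a + ustar b‖ := ⟨_, rfl⟩
  have hr2 : r ^ 2 = 2 - 2 * q := by
    rw [hr, norm_add_sq_real, hn, hn, hin a b hab]; ring
  have hr0 : 0 < r := by
    have : 0 ≤ r := hr ▸ norm_nonneg _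
    rcases this.eq_or_lt with h | h
    · rw [← h] at hr2; nlinarith
    · exact h
  have hrlt : r < 2 := by nlinarith
  obtain ⟨m, hm⟩ : ∃ m, m = r⁻¹ • (ustar a + ustar b) := ⟨_, rfl⟩
  have hmn : ‖m‖ = 1 := by
    rw [hm, norm_smul, ← hr, Real.norm_eq_abs, abs_of_pos (inv_pos.2 hr0)]
    field_simp
  have hmi : ∀ k, k ≠ a → k ≠ b → ⟪m, ustar k⟫ < -q := by
    intro k h1 h2
    rw [hm, real_inner_smul_left, inner_add_left, hin a k h1.symm, hin b k h2.symm,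
      inv_mul_lt_iff₀ hr0]
    nlinarith
  obtain ⟨w, hw⟩ : ∃ w : Fin N → EuclideanSpace ℝ (Fin d),
    w = fun k => if k = a ∨ k = b then m else ustar k := ⟨_, rfl⟩
  have hw1 : ∀ k, (k = a ∨ k = b) → w k = m := fun k h => by simp [hw, h]
  have hw2 : ∀ k, ¬ (k = a ∨ k = b) → w k = ustar k := fun k h => by
    rw [hw]; exact if_neg h
  have hwn : ∀ k, ‖w k‖ = 1 := by
    intro k
    by_cases h : k = a ∨ k = b
    · rw [hw1 k h, hmn]
    · rw [hw2 k h, hn]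
  refine ⟨w, w, hwn, hwn, Finset.sum_lt_sum ?_ ⟨{a, c}, hac, ?_⟩⟩
  · intro S hSm
    obtain ⟨i, j, hij, rfl⟩ := Finset.card_eq_two.1 (hcard S hSm)
    rw [batchLoss_pair _ hwn i j hij, batchLoss_pair _ hn i j hij]
    have key : ⟪w i, w j⟫ ≤ ⟪ustar i, ustar j⟫ := by
      rw [hin i j hij]
      by_cases h1 : i = a ∨ i = b <;> by_cases h2 : j = a ∨ j = b
      · exfalso
        rcases h1 with rfl | rfl <;> rcases h2 with rfl | rfl
        · exact hij rfl
        · exact hS hSm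
        · exact hS (by rwa [Finset.pair_comm])
        · exact hij rfl
      · rw [hw1 i h1, hw2 j h2]
        push Not at h2
        exact (hmi j h2.1 h2.2).le
      · rw [hw1 j h2, hw2 i h1, real_inner_comm]
        push Not at h1
        exact (hmi i h1.1 h1.2).le
      · rw [hw2 i h1, hw2 j h2, hin i j hij]
    have := Real.log_le_log (by positivity)
      (add_le_add_right (Real.exp_le_exp.2 key) (Real.exp 1))
    linarith
  · rw [batchLoss_pair _ hwn a c hca.symm, batchLoss_pair _ hn a c hca.symm]
    have key : ⟪w a, w c⟫ < ⟪ustar a, ustar c⟫ := by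
      rw [hin a c hca.symm, hw1 a (Or.inl rfl), hw2 c (by tauto)]
      exact hmi c hca hcb
    have := Real.log_lt_log (by positivity)
      (add_lt_add_right (Real.exp_lt_exp.2 key) (Real.exp 1))
    linarith
end

section
/- Let 2 ≤ B and 3 ≤ N ≤ d + 1. Let 𝒮 be a nonempty collection of size-B subsets of Fin N such that there exist distinct indices a, b ∈ Fin N with {a,b} ⊄ S for every S ∈ 𝒮 (i.e., the two data points a and b never belong together to any selected mini-batch). Then for any pair (u⋆, v⋆) with u⋆ = v⋆ whose family (u⋆ i) forms a simplex ETF, there exist u, v : Fin N → EuclideanSpace ℝ (Fin d) with ‖u i‖ = ‖v i‖ = 1 for all i such that Σ_{S ∈ 𝒮} L_S(u,v) < Σ_{S ∈ 𝒮} L_S(u⋆,v⋆); hence the minimizer of the mini-batch loss over 𝒮 is not the full-batch minimizer. -/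
open scoped RealInnerProductSpace BigOperators
open Finset

theorem batchLoss_lt_aux {N d : ℕ} (S : Finset (Fin N)) (hS : 2 ≤ S.card)
    (u x : Fin N → EuclideanSpace ℝ (Fin d))
    (hd : ∀ i, ⟪u i, u i⟫ = ⟪x i, x i⟫)
    (ho : ∀ i ∈ S, ∀ j ∈ S, i ≠ j → ⟪u i, u j⟫ < ⟪x i, x j⟫) :
    batchLoss S u u < batchLoss S x x := by
  have hne : S.Nonempty := Finset.card_pos.mp (by omega)
  have key : ∑ i ∈ S, Real.log (Real.exp ⟪x i, x i⟫ / ∑ j ∈ S, Real.exp ⟪x i, x j⟫)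
      < ∑ i ∈ S, Real.log (Real.exp ⟪u i, u i⟫ / ∑ j ∈ S, Real.exp ⟪u i, u j⟫) := by
    apply Finset.sum_lt_sum_of_nonempty hne
    intro i hi
    have hp : ∀ y : Fin N → EuclideanSpace ℝ (Fin d), 0 < ∑ j ∈ S, Real.exp ⟪y i, y j⟫ :=
      fun y => Finset.sum_pos (fun j _ => Real.exp_pos _) hne
    have hlt : ∑ j ∈ S, Real.exp ⟪u i, u j⟫ < ∑ j ∈ S, Real.exp ⟪x i, x j⟫ := by
      apply Finset.sum_lt_sum
      · intro j hj
        by_cases hij : i = j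
        · subst hij
          rw [hd]
        · exact Real.exp_le_exp.mpr (ho i hi j hj hij).le
      · obtain ⟨j, hj, hji⟩ := Finset.exists_mem_ne (by omega : 1 < S.card) i
        exact ⟨j, hj, Real.exp_lt_exp.mpr (ho i hi j hj hji.symm)⟩
    apply Real.log_lt_log (div_pos (Real.exp_pos _) (hp x))
    rw [hd]
    exact div_lt_div_of_pos_left (Real.exp_pos _) (hp u) hlt
  have hc : 0 < 1 / (S.card : ℝ) := by
    have : 0 < S.card := by omega
    positivity
  have := mul_lt_mul_of_pos_left key hc
  unfold batchLoss
  linarith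

/-- For `2 ≤ B` and `3 ≤ N ≤ d + 1`: if there are two indices `a ≠ b` that never
belong together to any selected mini-batch of size `B`, then the symmetric
simplex-ETF configuration does not minimize the mini-batch loss summed over the
selected collection. -/
theorem etf_not_minimizer_of_never_together (N B d : ℕ) (hB : 2 ≤ B)
    (hN3 : 3 ≤ N) (hNd : N ≤ d + 1)
    (𝒮 : Finset (Finset (Fin N))) (hne : 𝒮.Nonempty)
    (hcard : ∀ S ∈ 𝒮, S.card = B)
    (hsep : ∃ a b : Fin N, a ≠ b ∧ ∀ S ∈ 𝒮, ¬ ({a, b} : Finset (Fin N)) ⊆ S)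
    (ustar vstar : Fin N → EuclideanSpace ℝ (Fin d))
    (hsymm : ustar = vstar) (hetf : IsSimplexETF ustar) :
    ∃ u v : Fin N → EuclideanSpace ℝ (Fin d),
      (∀ i, ‖u i‖ = 1) ∧ (∀ i, ‖v i‖ = 1) ∧
      ∑ S ∈ 𝒮, batchLoss S u v < ∑ S ∈ 𝒮, batchLoss S ustar vstar := by
  obtain ⟨a, b, hab, hsep⟩ := hsep
  subst hsymm
  obtain ⟨hn, ho⟩ := hetf
  have hN : (3:ℝ) ≤ N := by exact_mod_cast hN3
  have h1 : (0:ℝ) < (N:ℝ) - 1 := by linarith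
  have h2 : (0:ℝ) < (N:ℝ) - 2 := by linarith
  have hself : ∀ i, ⟪ustar i, ustar i⟫ = (1:ℝ) := fun i => by
    rw [real_inner_self_eq_norm_sq, hn]; norm_num
  obtain ⟨s, hs⟩ : ∃ s : ℝ, s * s = ((N:ℝ) - 1)^2 / (N * ((N:ℝ) - 2)) :=
    ⟨Real.sqrt (((N:ℝ) - 1)^2 / (N * ((N:ℝ) - 2))), Real.mul_self_sqrt (by positivity)⟩
  let π : Fin N → Fin N := fun i => if i = b then a else i
  have hπb : ∀ i, π i ≠ b := by
    intro i
    by_cases h : i = b <;> simp [π, h, hab]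
  let u : Fin N → EuclideanSpace ℝ (Fin d) :=
    fun i => s • (ustar (π i) + (1 / ((N:ℝ) - 1)) • ustar b)
  have hu : ∀ i j, ⟪u i, u j⟫ = s * s * (⟪ustar (π i), ustar (π j)⟫ - (1 / ((N:ℝ) - 1))^2) := by
    intro i j
    simp only [u, inner_smul_left, inner_smul_right, inner_add_left, inner_add_right,
      hself, ho _ _ (hπb i), ho _ _ (hπb j).symm, RCLike.conj_to_real]
    ring
  have hud : ∀ i, ⟪u i, u i⟫ = (1:ℝ) := by
    intro i
    rw [hu, hself, hs]
    field_simp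
    ring
  have hun : ∀ i, ‖u i‖ = 1 := by
    intro i
    have := hud i
    rw [real_inner_self_eq_norm_sq] at this
    nlinarith [norm_nonneg (u i)]
  refine ⟨u, u, hun, hun, Finset.sum_lt_sum_of_nonempty hne ?_⟩
  intro S hS
  apply batchLoss_lt_aux S (by rw [hcard S hS]; exact hB) u ustar
  · intro i
    rw [hud, hself]
  · intro i hi j hj hij
    have hπ : π i ≠ π j := by
      intro h
      apply hsep S hS
      have : (i = a ∧ j = b) ∨ (i = b ∧ j = a) := by
        simp only [π] at h
        split_ifs at h <;> grind
      rcases this with ⟨rfl, rfl⟩ | ⟨rfl, rfl⟩ <;> simp [Finset.insert_subset_iff, hi, hj]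
    rw [hu, ho _ _ hπ, ho _ _ hij, hs]
    have e : ((N:ℝ) - 1)^2 / (N * ((N:ℝ) - 2)) * (-(1/((N:ℝ) - 1)) - (1 / ((N:ℝ) - 1))^2)
        = -(1/((N:ℝ) - 2)) := by
      field_simp
      ring
    rw [e]
    apply neg_lt_neg
    exact one_div_lt_one_div_of_lt h2 (by linarith)
end

section
/- Let 2 ≤ B < N ≤ d + 1 with B dividing N, and let B_1, …, B_{N/B} be pairwise disjoint size-B subsets of Fin N whose union is Fin N. Then the set of unit-norm minimizers of the partition mini-batch loss Σ_{k=1}^{N/B} L_{B_k}(u,v) is different from the set of unit-norm minimizers of the full-batch loss L(u,v): there exists a pair (u,v) with ‖u i‖ = ‖v i‖ = 1 for all i that minimizes Σ_k L_{B_k}(u,v) over all unit-norm pairs but does not minimize L(u,v); in particular one can choose such a minimizer in which the restriction of u to each batch B_k forms a simplex ETF of B points while the whole family (u i) does not form a simplex ETF of N points. -/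
open scoped RealInnerProductSpace BigOperators
open Finset

lemma pmd_tangent (m x : ℝ) : Real.exp m * (1 + x - m) ≤ Real.exp x := by
  have h := Real.add_one_le_exp (x - m)
  have : Real.exp x = Real.exp m * Real.exp (x - m) := by rw [← Real.exp_add]; ring_nf
  rw [this]
  exact mul_le_mul_of_nonneg_left (by linarith) (Real.exp_pos m).le

lemma pmd_tangent_lt (m x : ℝ) (hx : x ≠ m) : Real.exp m * (1 + x - m) < Real.exp x := by
  have h := Real.add_one_lt_exp (x := x - m) (sub_ne_zero.2 hx)
  have : Real.exp x = Real.exp m * Real.exp (x - m) := by rw [← Real.exp_add]; ring_nf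
  rw [this]
  exact mul_lt_mul_of_pos_left (by linarith) (Real.exp_pos m)

lemma pmd_log {ι : Type*} (S : Finset ι) (x : ι → ℝ) (i : ι) (hi : i ∈ S) :
    Real.log (Real.exp (x i) / ∑ j ∈ S, Real.exp (x j))
      = x i - Real.log (∑ j ∈ S, Real.exp (x j)) := by
  have : 0 < ∑ j ∈ S, Real.exp (x j) := Finset.sum_pos (fun j _ => Real.exp_pos _) ⟨i, hi⟩
  rw [Real.log_div (Real.exp_pos _).ne' this.ne', Real.log_exp]

/-- partition constant -/
noncomputable def pmdZ (B : ℝ) : ℝ := 1 + (B - 1) * Real.exp (-(B / (B - 1)))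

lemma pmdZ_pos (B : ℝ) (hB : 1 < B) : 0 < pmdZ B := by
  have := Real.exp_pos (-(B / (B - 1)))
  unfold pmdZ
  have : 0 < (B-1) * Real.exp (-(B / (B - 1))) := mul_pos (by linarith) this
  linarith

lemma pmd_row {ι : Type*} [DecidableEq ι] (S : Finset ι) (hS : 2 ≤ S.card)
    (x : ι → ℝ) (i : ι) (hi : i ∈ S) :
    Real.log (Real.exp (x i) / ∑ j ∈ S, Real.exp (x j)) ≤
      - Real.log (pmdZ S.card) - Real.exp (-((S.card:ℝ) / ((S.card:ℝ) - 1))) / pmdZ S.card *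
        ∑ j ∈ S.erase i, (x j - x i + (S.card:ℝ) / ((S.card:ℝ) - 1)) := by
  have hB : (2:ℝ) ≤ S.card := by exact_mod_cast hS
  have hZ := pmdZ_pos S.card (by linarith)
  rw [pmd_log S x i hi]
  set b := (S.card:ℝ) / ((S.card:ℝ) - 1) with hb
  set Z := pmdZ S.card with hZd
  set Y := ∑ j ∈ S.erase i, (x j - x i + b) with hY
  set m := Real.exp (-b) / Z * Y with hm
  have hce : ((S.erase i).card : ℝ) = S.card - 1 := by
    rw [Finset.card_erase_of_mem hi, Nat.cast_sub (by omega)]; simp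
  have hZe : Z = 1 + (S.card - 1) * Real.exp (-b) := rfl
  have hZm : Z * m = Real.exp (-b) * Y := by rw [hm]; field_simp
  have key : Real.exp (x i + m) * Z ≤ ∑ j ∈ S, Real.exp (x j) := by
    rw [← Finset.add_sum_erase _ _ hi]
    have h1 := pmd_tangent (x i + m) (x i)
    have h2 : ∑ j ∈ S.erase i, Real.exp (-b) * Real.exp (x i + m) * (1 + (x j - x i + b) - m)
        ≤ ∑ j ∈ S.erase i, Real.exp (x j) := by
      apply Finset.sum_le_sum
      intro j _
      have := pmd_tangent (x i + m - b) (x j)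
      rw [← Real.exp_add]
      have e1 : -b + (x i + m) = x i + m - b := by ring
      have e2 : 1 + (x j - x i + b) - m = 1 + x j - (x i + m - b) := by ring
      rw [e1, e2]; exact this
    rw [← Finset.mul_sum] at h2
    have h3 : ∑ j ∈ S.erase i, (1 + (x j - x i + b) - m) = (S.card - 1) * (1 - m) + Y := by
      rw [hY, ← hce, ← nsmul_eq_mul, ← Finset.sum_const, ← Finset.sum_add_distrib]
      exact Finset.sum_congr rfl fun j _ => by ring
    rw [h3] at h2
    have : Real.exp (x i + m) * Z = Real.exp (x i + m) * (1 + x i - (x i + m)) +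
        Real.exp (-b) * Real.exp (x i + m) * ((S.card - 1) * (1 - m) + Y) := by
      have : Real.exp (-b) * Real.exp (x i + m) * ((S.card - 1) * (1 - m) + Y) =
        Real.exp (x i + m) * ((S.card - 1) * Real.exp (-b) * (1-m) + Real.exp (-b) * Y) := by ring
      rw [this, ← hZm, show (S.card - 1) * Real.exp (-b) = Z - 1 by rw [hZe]; ring]
      ring
    linarith
  have := Real.log_le_log (mul_pos (Real.exp_pos _) hZ) key
  rw [Real.log_mul (Real.exp_pos _).ne' hZ.ne', Real.log_exp] at this
  linarith

lemma pmd_row_eq {ι : Type*} [DecidableEq ι] (S : Finset ι) (hS : 2 ≤ S.card)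
    (x : ι → ℝ) (i : ι) (hi : i ∈ S) (hii : x i = 1)
    (hx : ∀ j ∈ S, i ≠ j → x j = -(1/((S.card:ℝ) - 1))) :
    Real.log (Real.exp (x i) / ∑ j ∈ S, Real.exp (x j)) = - Real.log (pmdZ S.card) := by
  have hB : (2:ℝ) ≤ S.card := by exact_mod_cast hS
  have hce : ((S.erase i).card : ℝ) = S.card - 1 := by
    rw [Finset.card_erase_of_mem hi, Nat.cast_sub (by omega)]; simp
  have : ∑ j ∈ S, Real.exp (x j) = Real.exp (x i) * pmdZ S.card := by
    rw [← Finset.add_sum_erase _ _ hi, Finset.sum_congr rfl (g := fun _ => Real.exp (x i) * Real.exp (-((S.card:ℝ) / ((S.card:ℝ) - 1)))),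
      Finset.sum_const, nsmul_eq_mul, hce, pmdZ]
    · ring
    · intro j hj
      rw [hx j (Finset.mem_of_mem_erase hj) (Finset.ne_of_mem_erase hj).symm, ← Real.exp_add, hii]
      congr 1
      have : (S.card:ℝ) - 1 ≠ 0 := by linarith
      field_simp
      ring
  rw [this, ← Real.log_inv]
  congr 1
  have := pmdZ_pos S.card (by linarith)
  field_simp

lemma pmd_quad {ι E : Type*} [NormedAddCommGroup E] [InnerProductSpace ℝ E] [DecidableEq ι]
    (S : Finset ι) (hS : 2 ≤ S.card) (u v : ι → E) (hu : ∀ i, ‖u i‖ = 1) (hv : ∀ i, ‖v i‖ = 1) :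
    0 ≤ ∑ i ∈ S, ∑ j ∈ S.erase i, (⟪u i, v j⟫ - ⟪u i, v i⟫ + (S.card:ℝ) / ((S.card:ℝ) - 1)) := by
  have hB : (2:ℝ) ≤ S.card := by exact_mod_cast hS
  have h1 : ∀ i ∈ S, ∑ j ∈ S.erase i, (⟪u i, v j⟫ - ⟪u i, v i⟫ + (S.card:ℝ) / ((S.card:ℝ) - 1))
      = ⟪u i, ∑ j ∈ S, v j⟫ - S.card * ⟪u i, v i⟫ + S.card := by
    intro i hi
    have hce : ((S.erase i).card : ℝ) = S.card - 1 := by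
      rw [Finset.card_erase_of_mem hi, Nat.cast_sub (by omega)]; simp
    rw [inner_sum, ← Finset.add_sum_erase _ _ hi, Finset.sum_add_distrib, Finset.sum_sub_distrib,
      Finset.sum_const, Finset.sum_const, nsmul_eq_mul, nsmul_eq_mul, hce]
    have : (S.card:ℝ) - 1 ≠ 0 := by linarith
    field_simp
    ring
  rw [Finset.sum_congr rfl h1, Finset.sum_add_distrib, Finset.sum_sub_distrib, ← sum_inner,
    ← Finset.mul_sum, Finset.sum_const, nsmul_eq_mul]
  have h2 : ‖∑ i ∈ S, (u i - v i)‖ ^ 2 ≤ S.card * ∑ i ∈ S, ‖u i - v i‖ ^ 2 :=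
    (pow_le_pow_left₀ (norm_nonneg _) (norm_sum_le _ _) 2).trans sq_sum_le_card_mul_sum_sq
  have h3 : ∑ i ∈ S, ‖u i - v i‖ ^ 2 = 2 * S.card - 2 * ∑ i ∈ S, ⟪u i, v i⟫ := by
    rw [Finset.mul_sum, show 2 * (S.card:ℝ) = ∑ i ∈ S, (2:ℝ) by simp; ring, ← Finset.sum_sub_distrib]
    apply Finset.sum_congr rfl
    intro i _
    rw [norm_sub_sq_real, hu, hv]; ring
  rw [h3, Finset.sum_sub_distrib, norm_sub_sq_real] at h2
  nlinarith [sq_nonneg ‖∑ i ∈ S, u i‖, sq_nonneg ‖∑ i ∈ S, v i‖]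

lemma pmd_half {ι E : Type*} [NormedAddCommGroup E] [InnerProductSpace ℝ E] [DecidableEq ι]
    (S : Finset ι) (hS : 2 ≤ S.card) (u v : ι → E) (hu : ∀ i, ‖u i‖ = 1) (hv : ∀ i, ‖v i‖ = 1) :
    ∑ i ∈ S, Real.log (Real.exp ⟪u i, v i⟫ / ∑ j ∈ S, Real.exp ⟪u i, v j⟫) ≤
      S.card * (- Real.log (pmdZ S.card)) := by
  have hB : (2:ℝ) ≤ S.card := by exact_mod_cast hS
  have hZ := pmdZ_pos S.card (by linarith)
  refine (Finset.sum_le_sum fun i hi => pmd_row S hS (fun j => ⟪u i, v j⟫) i hi).trans ?_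
  rw [Finset.sum_sub_distrib, ← Finset.mul_sum, Finset.sum_const, nsmul_eq_mul]
  have := mul_nonneg (div_nonneg (Real.exp_pos (-((S.card:ℝ) / ((S.card:ℝ) - 1)))).le hZ.le)
    (pmd_quad S hS u v hu hv)
  linarith

lemma pmd_batch_ge {N d : ℕ} (S : Finset (Fin N)) (hS : 2 ≤ S.card)
    (u v : Fin N → EuclideanSpace ℝ (Fin d)) (hu : ∀ i, ‖u i‖ = 1) (hv : ∀ i, ‖v i‖ = 1) :
    2 * Real.log (pmdZ S.card) ≤ batchLoss S u v := by
  have h1 := pmd_half S hS u v hu hv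
  have h2 := pmd_half S hS v u hv hu
  have hB : (0:ℝ) < S.card := by exact_mod_cast (by omega : 0 < S.card)
  have := mul_le_mul_of_nonneg_left (add_le_add h1 h2) (one_div_pos.2 hB).le
  have e : 1 / (S.card:ℝ) * (S.card * (- Real.log (pmdZ S.card)) + S.card * (- Real.log (pmdZ S.card)))
    = - (2 * Real.log (pmdZ S.card)) := by field_simp; ring
  rw [e] at this
  unfold batchLoss
  linarith

lemma pmd_batch_eq {N d : ℕ} (S : Finset (Fin N)) (hS : 2 ≤ S.card)
    (u : Fin N → EuclideanSpace ℝ (Fin d)) (hu : ∀ i, ‖u i‖ = 1)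
    (h : ∀ i ∈ S, ∀ j ∈ S, i ≠ j → ⟪u i, u j⟫ = -(1/((S.card:ℝ) - 1))) :
    batchLoss S u u = 2 * Real.log (pmdZ S.card) := by
  have hB : (0:ℝ) < S.card := by exact_mod_cast (by omega : 0 < S.card)
  unfold batchLoss
  rw [Finset.sum_congr rfl fun i hi => pmd_row_eq S hS (fun j => ⟪u i, u j⟫) i hi
    (by simp [hu]) (h i hi), Finset.sum_const, nsmul_eq_mul]
  field_simp; ring

lemma pmd_full {N d : ℕ} (u v : Fin N → EuclideanSpace ℝ (Fin d)) :
    fullLoss u v = batchLoss Finset.univ u v := by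
  simp [fullLoss, batchLoss]

lemma pmd_simplex (M d : ℕ) (hM : 2 ≤ M) (hd : M ≤ d + 1) :
    ∃ w : Fin M → EuclideanSpace ℝ (Fin d), (∀ i, ‖w i‖ = 1) ∧
      ∀ i j, i ≠ j → ⟪w i, w j⟫ = -(1/((M:ℝ) - 1)) := by
  have hMr : (2:ℝ) ≤ M := by exact_mod_cast hM
  let o : EuclideanSpace ℝ (Fin M) := WithLp.toLp 2 (fun _ => 1)
  have ho : o ≠ 0 := by
    intro h
    have := congrArg (fun x : EuclideanSpace ℝ (Fin M) => x ⟨0, by omega⟩) h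
    simp [o] at this
  let W := (ℝ ∙ o)ᗮ
  haveI : Fact (Module.finrank ℝ (EuclideanSpace ℝ (Fin M)) = (M - 1) + 1) :=
    ⟨by simp; omega⟩
  have hW : Module.finrank ℝ W = M - 1 := Submodule.finrank_orthogonal_span_singleton ho
  let b := (stdOrthonormalBasis ℝ W).reindex (finCongr hW)
  let f : W →ₗ[ℝ] EuclideanSpace ℝ (Fin d) :=
    b.toBasis.constr ℝ (fun k => EuclideanSpace.basisFun (Fin d) ℝ (Fin.castLE (by omega) k))
  have hf : Orthonormal ℝ (f ∘ b.toBasis) := by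
    have : f ∘ b.toBasis = (EuclideanSpace.basisFun (Fin d) ℝ) ∘
        (Fin.castLE (by omega) : Fin (M-1) → Fin d) := by
      ext1 k
      simp only [f, Function.comp, Module.Basis.constr_basis]
    rw [this]
    exact (EuclideanSpace.basisFun (Fin d) ℝ).orthonormal.comp _ (Fin.castLE_injective _)
  let F := f.isometryOfOrthonormal (v := b.toBasis) (by simpa using b.orthonormal) hf
  let r : ℝ := √(M / (M - 1))
  have hr : r * r = M / (M - 1) := Real.mul_self_sqrt (div_nonneg (by linarith) (by linarith))
  let p : Fin M → EuclideanSpace ℝ (Fin M) := fun i =>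
    r • (EuclideanSpace.single i 1 - (1 / (M:ℝ)) • o)
  have hoo : ⟪o, o⟫ = (M:ℝ) := by rw [PiLp.inner_apply]; simp [o]
  have hso : ∀ i : Fin M, ⟪EuclideanSpace.single i (1:ℝ), o⟫ = (1:ℝ) := by
    intro i; simp [o, EuclideanSpace.inner_single_left]
  have hos : ∀ i : Fin M, ⟪o, EuclideanSpace.single i (1:ℝ)⟫ = (1:ℝ) := by
    intro i; rw [real_inner_comm, hso]
  have hpo : ∀ i, p i ∈ W := by
    intro i
    rw [Submodule.mem_orthogonal_singleton_iff_inner_right]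
    simp only [p, inner_smul_right, inner_sub_right, hos, hoo]
    field_simp; simp
  have hpp : ∀ i j, ⟪p i, p j⟫ = (M / (M - 1)) * ((if i = j then 1 else 0) - 1 / (M:ℝ)) := by
    intro i j
    have : ⟪EuclideanSpace.single i (1:ℝ), EuclideanSpace.single j (1:ℝ)⟫ = if i = j then (1:ℝ) else 0 := by
      simp [EuclideanSpace.inner_single_left, Pi.single_apply]
    simp only [p, inner_smul_right, inner_smul_left, inner_sub_right, inner_sub_left, hos, hso, hoo, this]
    rw [← hr]
    simp
    field_simp
    ring
  have hin : ∀ i j, ⟪F ⟨p i, hpo i⟩, F ⟨p j, hpo j⟩⟫ = ⟪p i, p j⟫ := by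
    intro i j
    rw [LinearIsometry.inner_map_map]; rfl
  have h1 : (M:ℝ) - 1 ≠ 0 := by linarith
  refine ⟨fun i => F ⟨p i, hpo i⟩, fun i => ?_, fun i j hij => ?_⟩
  · have : ‖F ⟨p i, hpo i⟩‖ ^ 2 = 1 := by
      rw [← real_inner_self_eq_norm_sq, hin, hpp]
      simp
      field_simp
    nlinarith [norm_nonneg (F ⟨p i, hpo i⟩)]
  · rw [hin, hpp, if_neg hij]
    field_simp; simp

theorem partition_minimizer_differs_from_full (N B d : ℕ) (hB : 2 ≤ B) (hBN : B < N)
    (hNd : N ≤ d + 1) (hdvd : B ∣ N)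
    (batches : Fin (N / B) → Finset (Fin N))
    (hcard : ∀ k, (batches k).card = B)
    (hdisj : ∀ k l, k ≠ l → Disjoint (batches k) (batches l))
    (hcover : (Finset.univ : Finset (Fin (N / B))).biUnion batches = Finset.univ) :
    ∃ u v : Fin N → EuclideanSpace ℝ (Fin d),
      (∀ i, ‖u i‖ = 1) ∧ (∀ i, ‖v i‖ = 1) ∧
      (∀ u' v' : Fin N → EuclideanSpace ℝ (Fin d),
        (∀ i, ‖u' i‖ = 1) → (∀ i, ‖v' i‖ = 1) →
        ∑ k, batchLoss (batches k) u v ≤ ∑ k, batchLoss (batches k) u' v') ∧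
      ¬ (∀ u' v' : Fin N → EuclideanSpace ℝ (Fin d),
        (∀ i, ‖u' i‖ = 1) → (∀ i, ‖v' i‖ = 1) →
        fullLoss u v ≤ fullLoss u' v') ∧
      (∀ k, ∀ i ∈ batches k, ∀ j ∈ batches k, i ≠ j →
        ⟪u i, u j⟫ = -(1/((B:ℝ) - 1))) ∧
      ¬ IsSimplexETF u := by
  obtain ⟨w, hw1, hw2⟩ := pmd_simplex B d hB (by omega)
  obtain ⟨z, hz1, hz2⟩ := pmd_simplex N d (by omega) hNd
  have hBr : (2:ℝ) ≤ B := by exact_mod_cast hB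
  have hNr : (B:ℝ) < N := by exact_mod_cast hBN
  have hB1 : (B:ℝ) - 1 ≠ 0 := by linarith
  have hN1 : (N:ℝ) - 1 ≠ 0 := by linarith
  have hne : -(1/((B:ℝ) - 1)) ≠ -(1/((N:ℝ) - 1)) := by
    intro h
    field_simp at h
    linarith
  have hmem : ∀ i, ∃ k, i ∈ batches k := by
    intro i
    have : i ∈ (Finset.univ : Finset (Fin (N / B))).biUnion batches := by rw [hcover]; simp
    simpa using this
  choose κ hκ using hmem
  have hκu : ∀ k i, i ∈ batches k → κ i = k := by
    intro k i hi
    by_contra hc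
    exact Finset.disjoint_left.1 (hdisj _ _ hc) (hκ i) hi
  let e := fun k => (batches k).equivFinOfCardEq (hcard k)
  let u : Fin N → EuclideanSpace ℝ (Fin d) := fun i => w (e (κ i) ⟨i, hκ i⟩)
  have hu : ∀ i, ‖u i‖ = 1 := fun i => hw1 _
  have hub : ∀ k, ∀ i ∈ batches k, ∀ j ∈ batches k, i ≠ j → ⟪u i, u j⟫ = -(1/((B:ℝ) - 1)) := by
    intro k i hi j hj hij
    have hui : ∀ i (hi : i ∈ batches k), u i = w (e k ⟨i, hi⟩) := by
      intro i hi
      have := hκu k i hi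
      subst this
      rfl
    rw [hui i hi, hui j hj]
    apply hw2
    intro h
    have := (e k).injective h
    exact hij (by simpa using this)
  have hpair : ∀ i, ∃ j, j ∈ batches (κ i) ∧ i ≠ j := by
    intro i
    obtain ⟨j, hj, hji⟩ := Finset.exists_mem_ne (by rw [hcard]; omega : 1 < (batches (κ i)).card) i
    exact ⟨j, hj, hji.symm⟩
  have hrow : ∀ k, ∀ i ∈ batches k, ∑ j ∈ batches k, ⟪u i, u j⟫ = 0 := by
    intro k i hi
    have hce : (((batches k).erase i).card : ℝ) = B - 1 := by
      rw [Finset.card_erase_of_mem hi, hcard, Nat.cast_sub (by omega)]; simp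
    rw [← Finset.add_sum_erase _ _ hi, Finset.sum_congr rfl (fun j hj => hub k i hi j
      (Finset.mem_of_mem_erase hj) (Finset.ne_of_mem_erase hj).symm), Finset.sum_const,
      nsmul_eq_mul, hce, real_inner_self_eq_norm_sq, hu]
    field_simp; simp
  have hbs : ∀ k, ∑ j ∈ batches k, u j = 0 := by
    intro k
    rw [← inner_self_eq_zero (𝕜 := ℝ), sum_inner]
    apply Finset.sum_eq_zero
    intro i hi
    rw [inner_sum, hrow k i hi]
  have htot : ∑ j, u j = 0 := by
    rw [← hcover, Finset.sum_biUnion]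
    · exact Finset.sum_eq_zero fun k _ => hbs k
    · intro k _ l _ hkl
      exact hdisj k l hkl
  have i0 : Fin N := ⟨0, by omega⟩
  have hcu : (Finset.univ : Finset (Fin N)).card = N := by simp
  have hZN := pmdZ_pos (N:ℝ) (by linarith)
  -- strict row bound
  have hstrict : ∀ i, Real.log (Real.exp ⟪u i, u i⟫ / ∑ j, Real.exp ⟪u i, u j⟫) <
      - Real.log (pmdZ N) := by
    intro i
    have key : Real.exp 1 * pmdZ N < ∑ j, Real.exp ⟪u i, u j⟫ := by
      have hi := Finset.mem_univ i
      have hsum : ∑ j ∈ Finset.univ.erase i, ⟪u i, u j⟫ = -1 := by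
        have h0 : ∑ j, ⟪u i, u j⟫ = 0 := by rw [← inner_sum, htot, inner_zero_right]
        rw [← Finset.add_sum_erase _ _ hi, real_inner_self_eq_norm_sq, hu] at h0
        linarith
      have hce : (((Finset.univ : Finset (Fin N)).erase i).card : ℝ) = N - 1 := by
        rw [Finset.card_erase_of_mem hi, hcu, Nat.cast_sub (by omega)]; simp
      have hlt : ∑ j ∈ Finset.univ.erase i, Real.exp (-(1/((N:ℝ)-1))) *
          (1 + ⟪u i, u j⟫ - -(1/((N:ℝ)-1))) < ∑ j ∈ Finset.univ.erase i, Real.exp ⟪u i, u j⟫ := by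
        obtain ⟨j, hj, hij⟩ := hpair i
        refine Finset.sum_lt_sum (fun j _ => pmd_tangent _ _) ⟨j, by simp [hij.symm], ?_⟩
        apply pmd_tangent_lt
        rw [hub _ i (hκ i) j hj hij]
        exact hne
      rw [← Finset.mul_sum, Finset.sum_sub_distrib, Finset.sum_add_distrib, hsum,
        Finset.sum_const, Finset.sum_const, nsmul_eq_mul, nsmul_eq_mul, hce] at hlt
      have e1 : ((N:ℝ) - 1) * 1 + -1 - ((N:ℝ) - 1) * -(1/((N:ℝ)-1)) = N - 1 := by
        field_simp; ring
      rw [e1] at hlt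
      rw [← Finset.add_sum_erase _ _ hi, real_inner_self_eq_norm_sq, hu]
      have e2 : Real.exp 1 * pmdZ N = Real.exp 1 + Real.exp (-(1/((N:ℝ)-1))) * (N - 1) := by
        have : Real.exp (-(1/((N:ℝ)-1))) = Real.exp 1 * Real.exp (-((N:ℝ)/(N-1))) := by
          rw [← Real.exp_add]; congr 1; field_simp; ring
        rw [this, pmdZ]; ring
      rw [e2, one_pow]
      linarith
    have := Real.log_lt_log (mul_pos (Real.exp_pos _) hZN) key
    rw [Real.log_mul (Real.exp_pos _).ne' hZN.ne', Real.log_exp] at this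
    rw [pmd_log Finset.univ (fun j => ⟪u i, u j⟫) i (Finset.mem_univ i)]
    have : ⟪u i, u i⟫ = (1:ℝ) := by rw [real_inner_self_eq_norm_sq, hu]; norm_num
    simp only [this]
    linarith
  refine ⟨u, u, hu, hu, ?_, ?_, hub, ?_⟩
  · intro u' v' hu' hv'
    apply Finset.sum_le_sum
    intro k _
    rw [pmd_batch_eq (batches k) (by rw [hcard]; exact hB) u hu (by rw [hcard]; exact hub k)]
    exact pmd_batch_ge _ (by rw [hcard]; exact hB) u' v' hu' hv'
  · intro h
    have h1 := h z z hz1 hz1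
    rw [pmd_full z z, pmd_batch_eq Finset.univ (by rw [hcu]; omega) z hz1
      (by rw [hcu]; exact fun i _ j _ => hz2 i j), hcu] at h1
    have h2 : ∑ i, Real.log (Real.exp ⟪u i, u i⟫ / ∑ j, Real.exp ⟪u i, u j⟫) <
        ∑ i : Fin N, - Real.log (pmdZ N) :=
      Finset.sum_lt_sum (fun i _ => (hstrict i).le) ⟨i0, Finset.mem_univ _, hstrict i0⟩
    rw [Finset.sum_const, nsmul_eq_mul, hcu] at h2
    have hN0 : (0:ℝ) < N := by linarith
    have h3 := mul_lt_mul_of_pos_left h2 (one_div_pos.2 hN0)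
    have e3 : 1 / (N:ℝ) * (N * - Real.log (pmdZ N)) = - Real.log (pmdZ N) := by field_simp
    rw [e3] at h3
    unfold fullLoss at h1
    linarith
  · intro h
    obtain ⟨j, hj, hij⟩ := hpair i0
    exact hne ((hub _ i0 (hκ i0) j hj hij).symm.trans (h.2 i0 j hij))
end

section
/- Let d ≥ 2 and N = 2d. Let g : ℝ → ℝ be convex and nonincreasing on [0, 4]. Let (u i), i ∈ Fin N, be unit vectors in EuclideanSpace ℝ (Fin d) that are antipodal, i.e., for each i there exists j with u j = −(u i). Then Σ_i Σ_{j ≠ i} g(‖u i − u j‖²) ≥ N·g(4) + N·(N−2)·g(2), and equality holds when (u i) forms a simplex cross-polytope. Consequently, among antipodal unit-norm configurations with N = 2d, the energy Σ_i Σ_{j ≠ i} g(‖u i − u j‖²) is minimized by the simplex cross-polytope. -/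
open scoped RealInnerProductSpace BigOperators
open Finset

/-- For `N = 2d` and a convex nonincreasing kernel `g` on `[0,4]`, the pairwise
energy of an antipodal family of unit vectors is at least `N·g(4) + N·(N−2)·g(2)`,
with equality for the simplex cross-polytope; hence the cross-polytope minimizes
the energy among antipodal unit-norm configurations. -/
theorem crossPolytope_minimizes_energy (d : ℕ) (hd : 2 ≤ d) (N : ℕ) (hN : N = 2 * d)
    (g : ℝ → ℝ) (hconv : ConvexOn ℝ (Set.Icc (0:ℝ) 4) g)
    (hmono : AntitoneOn g (Set.Icc (0:ℝ) 4))
    (u : Fin N → EuclideanSpace ℝ (Fin d)) (hnorm : ∀ i, ‖u i‖ = 1)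
    (hanti : ∀ i, ∃ j, u j = -(u i)) :
    ((N:ℝ) * g 4 + (N:ℝ) * ((N:ℝ) - 2) * g 2
        ≤ ∑ i, ∑ j ∈ Finset.univ.erase i, g (‖u i - u j‖^2)) ∧
    (IsSimplexCrossPolytope u →
      ∑ i, ∑ j ∈ Finset.univ.erase i, g (‖u i - u j‖^2)
        = (N:ℝ) * g 4 + (N:ℝ) * ((N:ℝ) - 2) * g 2) := by
  have hsq : ∀ i j, ‖u i - u j‖^2 = 2 - 2 * ⟪u i, u j⟫ := by
    intro i j
    rw [norm_sub_sq_real, hnorm, hnorm]; ring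
  have hself : ∀ i, ⟪u i, u i⟫ = (1:ℝ) := by
    intro i
    rw [real_inner_self_eq_norm_sq, hnorm]; norm_num
  have hcard : ∀ i j : Fin N, j ≠ i → (((univ.erase i).erase j).card : ℝ) = (N:ℝ) - 2 := by
    intro i j hij
    have h1 : j ∈ univ.erase i := by simp [hij]
    rw [Finset.card_erase_of_mem h1, Finset.card_erase_of_mem (Finset.mem_univ i),
      Finset.card_univ, Fintype.card_fin, Nat.sub_sub, Nat.cast_sub (by omega)]
    norm_num
  have hNr : (4:ℝ) ≤ N := by
    have : 4 ≤ N := by omega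
    exact_mod_cast this
  constructor
  · choose σ hσ using hanti
    have hin : ∀ i, ⟪u i, u (σ i)⟫ = (-1:ℝ) := by
      intro i
      rw [hσ, inner_neg_right, hself]
    have hne : ∀ i, σ i ≠ i := by
      intro i h
      have h1 := hin i
      rw [h, hself] at h1
      norm_num at h1
    have hmem : ∀ i j, ‖u i - u j‖^2 ∈ Set.Icc (0:ℝ) 4 := by
      intro i j
      refine ⟨by positivity, ?_⟩
      have h1 := norm_sub_le (u i) (u j)
      rw [hnorm, hnorm] at h1
      nlinarith [norm_nonneg (u i - u j)]
    have hsplit : ∀ (f : Fin N → ℝ) (i : Fin N), ∑ j ∈ univ.erase i, f j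
        = f (σ i) + ∑ j ∈ (univ.erase i).erase (σ i), f j := by
      intro f i
      rw [Finset.add_sum_erase]
      simp [hne]
    have hfull : ∀ (f : Fin N → ℝ) (i : Fin N), ∑ j, f j
        = f i + (f (σ i) + ∑ j ∈ (univ.erase i).erase (σ i), f j) := by
      intro f i
      rw [← hsplit, Finset.add_sum_erase _ _ (Finset.mem_univ i)]
    have hnn : 0 ≤ ∑ i, ∑ j, ⟪u i, u j⟫ := by
      have h1 : ∑ i, ∑ j, ⟪u i, u j⟫ = ⟪∑ i, u i, ∑ j, u j⟫ := by
        rw [sum_inner]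
        simp_rw [inner_sum]
      rw [h1]
      exact real_inner_self_nonneg
    have hnn2 : 0 ≤ ∑ i, ∑ j ∈ (univ.erase i).erase (σ i), ⟪u i, u j⟫ := by
      convert hnn using 2 with i
      rw [hfull _ i, hself, hin]; ring
    set c : ℝ := (N:ℝ) * ((N:ℝ) - 2) with hc
    have hcpos : 0 < c := by rw [hc]; apply mul_pos <;> linarith
    set S : Finset (Σ _ : Fin N, Fin N) := univ.sigma (fun i => (univ.erase i).erase (σ i)) with hS
    have hw : ∑ p ∈ S, c⁻¹ = 1 := by
      rw [hS, Finset.sum_sigma]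
      simp only [Finset.sum_const, nsmul_eq_mul]
      rw [Finset.sum_congr rfl (fun i _ => by rw [hcard i _ (hne i)])]
      rw [Finset.sum_const, Finset.card_univ, Fintype.card_fin, nsmul_eq_mul, ← mul_assoc, ← hc]
      exact mul_inv_cancel₀ hcpos.ne'
    have hJ := hconv.map_sum_le (t := S) (w := fun _ => c⁻¹)
      (p := fun p => ‖u p.1 - u p.2‖^2) (fun _ _ => by positivity) hw (fun p _ => hmem p.1 p.2)
    have hM := hconv.1.sum_mem (t := S) (w := fun _ => c⁻¹)
      (z := fun p => ‖u p.1 - u p.2‖^2) (fun _ _ => by positivity) hw (fun p _ => hmem p.1 p.2)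
    have hle : ∑ p ∈ S, c⁻¹ • ‖u p.1 - u p.2‖^2 ≤ 2 := by
      have h2 : ∑ p ∈ S, c⁻¹ • ‖u p.1 - u p.2‖^2
          = (∑ p ∈ S, c⁻¹) * 2 - c⁻¹ * (2 * ∑ p ∈ S, ⟪u p.1, u p.2⟫) := by
        rw [Finset.sum_mul, Finset.mul_sum, Finset.mul_sum, ← Finset.sum_sub_distrib]
        refine Finset.sum_congr rfl fun p _ => ?_
        rw [hsq, smul_eq_mul]; ring
      have h3 : 0 ≤ ∑ p ∈ S, ⟪u p.1, u p.2⟫ := by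
        rw [hS, Finset.sum_sigma]; exact hnn2
      rw [h2, hw]
      have : 0 ≤ c⁻¹ * (2 * ∑ p ∈ S, ⟪u p.1, u p.2⟫) := by positivity
      linarith
    have h4 := hmono hM (by norm_num : (2:ℝ) ∈ Set.Icc (0:ℝ) 4) hle
    have h5 := h4.trans hJ
    rw [← Finset.smul_sum, smul_eq_mul, hS, Finset.sum_sigma, inv_mul_eq_div,
      le_div_iff₀ hcpos] at h5
    have h6 : ∑ i, ∑ j ∈ univ.erase i, g (‖u i - u j‖^2)
        = (N:ℝ) * g 4 + ∑ i, ∑ j ∈ (univ.erase i).erase (σ i), g (‖u i - u j‖^2) := by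
      have : ∀ i, g (‖u i - u (σ i)‖^2) = g 4 := by
        intro i; rw [hsq, hin]; norm_num
      simp_rw [hsplit, this]
      rw [Finset.sum_add_distrib]
      simp
    rw [h6]
    linarith
  · rintro ⟨-, h⟩
    have hrow : ∀ i, ∑ j ∈ univ.erase i, g (‖u i - u j‖^2) = g 4 + ((N:ℝ) - 2) * g 2 := by
      intro i
      obtain ⟨j, hj, -, hk⟩ := h i
      have hji : j ≠ i := by
        rintro rfl
        rw [hself] at hj
        norm_num at hj
      rw [← Finset.add_sum_erase _ _ (show j ∈ univ.erase i by simp [hji])]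
      congr 1
      · rw [hsq, hj]; norm_num
      · rw [← hcard i j hji, ← nsmul_eq_mul, ← Finset.sum_const]
        refine Finset.sum_congr rfl fun k hk' => ?_
        simp only [Finset.mem_erase, Finset.mem_univ, and_true] at hk'
        rw [hsq, hk k hk'.2 hk'.1]; norm_num
    simp_rw [hrow]
    rw [Finset.sum_const, Finset.card_univ, Fintype.card_fin, nsmul_eq_mul]; ring
end

section
/- Let N ≥ 2 and let u, v : Fin N → EuclideanSpace ℝ (Fin d) be arbitrary. Define the one-sided contrastive loss ℓ(u,v) = (1/N) Σ_i log( 1 + Σ_{j ≠ i} exp(⟪u i, v j − v i⟫) ). Then ℓ(u,v) ≥ log( 1 + (N−1) · exp( ( ⟪Σ_j v j, Σ_i u i⟫ − N · Σ_i ⟪u i, v i⟫ ) / (N(N−1)) ) ). -/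
open scoped RealInnerProductSpace BigOperators
open Finset

/-- The one-sided contrastive loss `(1/N) Σ_i log(1 + Σ_{j ≠ i} exp ⟪u i, v j − v i⟫)`. -/
noncomputable def oneSidedLoss {N d : ℕ} (u v : Fin N → EuclideanSpace ℝ (Fin d)) : ℝ :=
  (1/(N:ℝ)) * ∑ i, Real.log (1 + ∑ j ∈ Finset.univ.erase i, Real.exp ⟪u i, v j - v i⟫)

lemma tangent_aux {ι : Type*} (s : Finset ι) (x : ι → ℝ) (a : ℝ) :
    Real.log (1 + (s.card : ℝ) * Real.exp a)
      + Real.exp a / (1 + (s.card : ℝ) * Real.exp a) * ∑ j ∈ s, (x j - a)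
      ≤ Real.log (1 + ∑ j ∈ s, Real.exp (x j)) := by
  set D := 1 + (s.card : ℝ) * Real.exp a with hD
  have hDpos : 0 < D := by positivity
  set t := Real.exp a / D * ∑ j ∈ s, (x j - a) with ht
  have hT : D * t = Real.exp a * ∑ j ∈ s, (x j - a) := by
    rw [ht]; field_simp
  rw [Real.le_log_iff_exp_le (by positivity), Real.exp_add, Real.exp_log hDpos]
  have key : ∀ y : ℝ, Real.exp t * (1 + y - t) ≤ Real.exp y := by
    intro y
    have h := Real.add_one_le_exp (y - t)
    calc Real.exp t * (1 + y - t) ≤ Real.exp t * Real.exp (y - t) := by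
          gcongr; linarith
      _ = Real.exp y := by rw [← Real.exp_add]; congr 1; ring
  have h0 := key 0
  rw [Real.exp_zero] at h0
  have h1 : ∑ j ∈ s, Real.exp a * (Real.exp t * (1 + (x j - a) - t)) ≤ ∑ j ∈ s, Real.exp (x j) := by
    apply Finset.sum_le_sum
    intro j _
    calc _ ≤ Real.exp a * Real.exp (x j - a) := by
          gcongr; exact key _
      _ = _ := by rw [← Real.exp_add]; congr 1; ring
  have h2 : ∑ j ∈ s, Real.exp a * (Real.exp t * (1 + (x j - a) - t))
      = Real.exp a * Real.exp t * (s.card * (1 - t) + ∑ j ∈ s, (x j - a)) := by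
    rw [← nsmul_eq_mul, ← Finset.sum_const, ← Finset.sum_add_distrib, Finset.mul_sum]
    apply Finset.sum_congr rfl
    intro j _
    ring
  have h3 : D * Real.exp t = Real.exp t * (1 + 0 - t)
      + Real.exp a * Real.exp t * (s.card * (1 - t) + ∑ j ∈ s, (x j - a)) := by
    linear_combination Real.exp t * hT + (Real.exp t - Real.exp t * t) * hD
  linarith

/-- Jensen lower bound for the one-sided contrastive loss. -/
theorem oneSidedLoss_ge_jensen_bound (N d : ℕ) (hN : 2 ≤ N)
    (u v : Fin N → EuclideanSpace ℝ (Fin d)) :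
    Real.log (1 + ((N:ℝ) - 1) *
        Real.exp ((⟪∑ j, v j, ∑ i, u i⟫ - (N:ℝ) * ∑ i, ⟪u i, v i⟫) / ((N:ℝ) * ((N:ℝ) - 1))))
      ≤ oneSidedLoss u v := by
  have hN' : (2:ℝ) ≤ N := by exact_mod_cast hN
  have hn0 : (N:ℝ) ≠ 0 := by linarith
  have hn1 : (N:ℝ) - 1 ≠ 0 := by linarith
  set S := ⟪∑ j, v j, ∑ i, u i⟫ - (N:ℝ) * ∑ i, ⟪u i, v i⟫ with hS
  set a := S / ((N:ℝ) * ((N:ℝ) - 1)) with ha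
  have hc : ∀ i : Fin N, (((Finset.univ.erase i).card : ℕ) : ℝ) = (N:ℝ) - 1 := by
    intro i
    rw [Finset.card_erase_of_mem (Finset.mem_univ i), Finset.card_univ, Fintype.card_fin,
      Nat.cast_sub (by omega), Nat.cast_one]
  have hrow : ∀ i : Fin N, ∑ j ∈ Finset.univ.erase i, (⟪u i, v j - v i⟫ - a)
      = ⟪u i, ∑ j, v j⟫ - N * ⟪u i, v i⟫ - ((N:ℝ) - 1) * a := by
    intro i
    rw [Finset.sum_sub_distrib, Finset.sum_const, nsmul_eq_mul, hc,
      Finset.sum_erase _ (by simp)]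
    simp only [inner_sub_right, Finset.sum_sub_distrib, inner_sum, Finset.sum_const,
      Finset.card_univ, Fintype.card_fin, nsmul_eq_mul]
  have htot : ∑ i : Fin N, ∑ j ∈ Finset.univ.erase i, (⟪u i, v j - v i⟫ - a) = 0 := by
    simp only [hrow]
    rw [Finset.sum_sub_distrib, Finset.sum_sub_distrib, ← sum_inner, ← Finset.mul_sum,
      real_inner_comm, ← hS, Finset.sum_const, Finset.card_univ, Fintype.card_fin,
      nsmul_eq_mul, ha]
    field_simp
    ring
  have hsum := Finset.sum_le_sum (fun i (_ : i ∈ (Finset.univ : Finset (Fin N))) =>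
    tangent_aux (Finset.univ.erase i) (fun j => ⟪u i, v j - v i⟫) a)
  simp only [hc] at hsum
  rw [Finset.sum_add_distrib, ← Finset.mul_sum, htot, Finset.sum_const, Finset.card_univ,
    Fintype.card_fin, nsmul_eq_mul, mul_zero, add_zero] at hsum
  unfold oneSidedLoss
  rw [one_div, inv_mul_eq_div, le_div_iff₀ (by linarith), mul_comm]
  exact hsum
end

section
/- Let N ≥ 1 and let u, v : Fin N → EuclideanSpace ℝ (Fin d) satisfy ‖u i‖ = 1 and ‖v i‖ = 1 for all i. Then N · Σ_i ⟪u i, v i⟫ − ⟪Σ_i u i, Σ_i v i⟫ ≤ N². Moreover, if u = v, Σ_i u i = 0 and all u i are unit vectors (as holds when (u i) forms a simplex ETF), then equality holds. -/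
open scoped RealInnerProductSpace BigOperators
open Finset

/-- For unit-norm families, `N·Σᵢ⟪uᵢ,vᵢ⟫ − ⟪Σᵢuᵢ, Σᵢvᵢ⟫ ≤ N²`, with equality when
`u = v` and `Σᵢ uᵢ = 0` (as holds for a simplex ETF). -/
theorem inner_sum_bound (N d : ℕ) (hN : 1 ≤ N)
    (u v : Fin N → EuclideanSpace ℝ (Fin d))
    (hu : ∀ i, ‖u i‖ = 1) (hv : ∀ i, ‖v i‖ = 1) :
    ((N:ℝ) * ∑ i, ⟪u i, v i⟫ - ⟪∑ i, u i, ∑ i, v i⟫ ≤ (N:ℝ)^2) ∧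
    (u = v → (∑ i, u i) = 0 →
      (N:ℝ) * ∑ i, ⟪u i, v i⟫ - ⟪∑ i, u i, ∑ i, v i⟫ = (N:ℝ)^2) := by
  constructor
  · have h1 : ∀ i, ⟪u i, v i⟫ = 1 - ‖u i - v i‖ ^ 2 / 2 := by
      intro i
      have h := norm_sub_sq_real (u i) (v i)
      rw [hu, hv] at h
      linarith
    have h2 : ‖∑ i, u i - ∑ i, v i‖ ^ 2 ≤ (N:ℝ) * ∑ i, ‖u i - v i‖ ^ 2 := by
      rw [← Finset.sum_sub_distrib]
      calc ‖∑ i, (u i - v i)‖ ^ 2 ≤ (∑ i, ‖u i - v i‖) ^ 2 := by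
            gcongr
            exact norm_sum_le _ _
        _ ≤ _ := by
            simpa using sq_sum_le_card_mul_sum_sq (s := (Finset.univ : Finset (Fin N)))
              (f := fun i => ‖u i - v i‖)
    have h3 := norm_sub_sq_real (∑ i, u i) (∑ i, v i)
    have h4 : (N:ℝ) * ∑ i, ⟪u i, v i⟫ = (N:ℝ) ^ 2 - (N:ℝ) * (∑ i, ‖u i - v i‖ ^ 2) / 2 := by
      simp_rw [h1]
      rw [Finset.sum_sub_distrib, ← Finset.sum_div]
      simp
      ring
    rw [h4]
    nlinarith [sq_nonneg ‖∑ i, u i‖, sq_nonneg ‖∑ i, v i‖]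
  · rintro rfl h0
    simp [h0, hu]
    ring
end

section
/- Let B ≥ 1 and define the softmax map p : EuclideanSpace ℝ (Fin B) → EuclideanSpace ℝ (Fin B) by p(x)_i = exp(x_i) / Σ_k exp(x_k). Then for all x, y with every coordinate in [−1, 1], one has ‖p(x) − p(y)‖ ≤ (e²/B) · ‖x − y‖, where ‖·‖ is the Euclidean norm and e = exp(1). -/
open scoped BigOperators
open Finset

/-- The softmax map on `ℝ^B`. -/
noncomputable def softmax {B : ℕ} (x : EuclideanSpace ℝ (Fin B)) : EuclideanSpace ℝ (Fin B) :=
  WithLp.toLp 2 fun i => Real.exp (x i) / ∑ k, Real.exp (x k)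

lemma sm_bound {B : ℕ} (p d : Fin B → ℝ) (M : ℝ) (hp : ∀ i, 0 ≤ p i) (hM : ∀ i, p i ≤ M)
    (hM0 : 0 ≤ M) (hs : ∑ i, p i = 1) :
    ∑ i, (p i * (d i - ∑ k, p k * d k)) ^ 2 ≤ M ^ 2 * ∑ i, d i ^ 2 := by
  set m := ∑ k, p k * d k with hm
  have h1 : ∑ i, (p i * (d i - m)) ^ 2 ≤ ∑ i, M * (p i * (d i - m) ^ 2) := by
    refine Finset.sum_le_sum fun i _ => ?_
    have := mul_le_mul_of_nonneg_right (hM i) (mul_nonneg (hp i) (sq_nonneg (d i - m)))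
    nlinarith
  have h2 : ∑ i, p i * (d i - m) ^ 2 = ∑ i, p i * d i ^ 2 - m ^ 2 := by
    have : ∀ i, p i * (d i - m) ^ 2 = p i * d i ^ 2 - 2 * m * (p i * d i) + m ^ 2 * p i := by
      intro i; ring
    simp only [this, Finset.sum_add_distrib, Finset.sum_sub_distrib, ← Finset.mul_sum, hs, ← hm]
    ring
  have h3 : ∑ i, p i * d i ^ 2 ≤ M * ∑ i, d i ^ 2 := by
    rw [Finset.mul_sum]
    exact Finset.sum_le_sum fun i _ => mul_le_mul_of_nonneg_right (hM i) (sq_nonneg _)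
  rw [← Finset.mul_sum, h2] at h1
  have h4 : M * (∑ i, p i * d i ^ 2 - m ^ 2) ≤ M * (M * ∑ i, d i ^ 2) :=
    mul_le_mul_of_nonneg_left (by nlinarith [sq_nonneg m]) hM0
  nlinarith

/-- The softmax map is `(e²/B)`-Lipschitz on the cube `[−1,1]^B` with respect to
the Euclidean norm. -/
theorem softmax_lipschitz_on_cube (B : ℕ) (hB : 1 ≤ B)
    (x y : EuclideanSpace ℝ (Fin B))
    (hx : ∀ i, |x i| ≤ 1) (hy : ∀ i, |y i| ≤ 1) :
    ‖softmax x - softmax y‖ ≤ (Real.exp 1)^2 / (B:ℝ) * ‖x - y‖ := by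
  have hBpos : (0:ℝ) < B := by exact_mod_cast hB
  have : Nonempty (Fin B) := ⟨⟨0, hB⟩⟩
  let z : ℝ → Fin B → ℝ := fun t i => y i + t * (x i - y i)
  let S : ℝ → ℝ := fun t => ∑ k, Real.exp (z t k)
  have hS : ∀ t, 0 < S t := fun t =>
    Finset.sum_pos (fun i _ => Real.exp_pos _) Finset.univ_nonempty
  let q : ℝ → Fin B → ℝ := fun t i => Real.exp (z t i) / S t
  let q' : ℝ → Fin B → ℝ := fun t i =>
    q t i * ((x i - y i) - ∑ k, q t k * (x k - y k))
  have hz : ∀ t i, HasDerivAt (fun t => Real.exp (z t i)) (Real.exp (z t i) * (x i - y i)) t := by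
    intro t i
    have := (((hasDerivAt_id t).mul_const (x i - y i)).const_add (y i)).exp
    simpa [z] using this
  have hSd : ∀ t, HasDerivAt S (∑ k, Real.exp (z t k) * (x k - y k)) t := by
    intro t
    exact HasDerivAt.fun_sum fun i _ => hz t i
  have hq : ∀ t i, HasDerivAt (fun t => q t i) (q' t i) t := by
    intro t i
    refine ((hz t i).fun_div (hSd t) (hS t).ne').congr_deriv ?_
    symm
    have h : ∑ k, q t k * (x k - y k) = (∑ k, Real.exp (z t k) * (x k - y k)) / S t := by
      rw [Finset.sum_div]
      exact Finset.sum_congr rfl fun k _ => by simp only [q]; ring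
    change q t i * ((x i - y i) - ∑ k, q t k * (x k - y k)) = _
    rw [h]
    change Real.exp (z t i) / S t * _ = _
    have := (hS t).ne'
    field_simp
  let f : ℝ → EuclideanSpace ℝ (Fin B) := fun t => WithLp.toLp 2 (q t)
  have hf : ∀ t, HasDerivAt f (WithLp.toLp 2 (q' t)) t := by
    intro t
    have h1 : HasDerivAt q (q' t) t := hasDerivAt_pi.2 (hq t)
    exact ((PiLp.continuousLinearEquiv 2 ℝ (fun _ : Fin B => ℝ)).symm
      : (Fin B → ℝ) →L[ℝ] EuclideanSpace ℝ (Fin B)).hasFDerivAt.comp_hasDerivAt t h1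
  have hb : ∀ t ∈ Set.Ico (0:ℝ) 1, ‖(WithLp.toLp 2 (q' t) : EuclideanSpace ℝ (Fin B))‖
      ≤ (Real.exp 1)^2 / (B:ℝ) * ‖x - y‖ := by
    intro t ht
    have hz1 : ∀ i, -1 ≤ z t i ∧ z t i ≤ 1 := by
      intro i
      have h1 := abs_le.1 (hx i)
      have h2 := abs_le.1 (hy i)
      simp only [z]
      constructor <;> nlinarith [ht.1, ht.2]
    have hSl : B * Real.exp (-1) ≤ S t := by
      have := Finset.card_nsmul_le_sum (Finset.univ : Finset (Fin B))
        (fun k => Real.exp (z t k)) (Real.exp (-1))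
        (fun i _ => Real.exp_le_exp.2 (hz1 i).1)
      simpa using this
    have hqM : ∀ i, q t i ≤ (Real.exp 1)^2 / (B:ℝ) := by
      intro i
      simp only [q]
      rw [div_le_div_iff₀ (hS t) hBpos]
      have h1 : Real.exp (z t i) ≤ Real.exp 1 := Real.exp_le_exp.2 (hz1 i).2
      have h2 : Real.exp 1 * Real.exp (-1) = 1 := by rw [← Real.exp_add]; simp
      calc Real.exp (z t i) * B ≤ Real.exp 1 * B := by gcongr
        _ = Real.exp 1 ^ 2 * (B * Real.exp (-1)) := by linear_combination (-Real.exp 1 * B) * h2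
        _ ≤ _ := by gcongr
    have hM0 : 0 ≤ (Real.exp 1)^2 / (B:ℝ) := by positivity
    have key := sm_bound (q t) (fun i => x i - y i) _
      (fun i => div_nonneg (Real.exp_pos _).le (hS t).le) hqM hM0
      (by simp only [q]; rw [← Finset.sum_div]; exact div_self (hS t).ne')
    refine (sq_le_sq₀ (norm_nonneg _) (by positivity)).1 ?_
    rw [mul_pow, EuclideanSpace.norm_sq_eq, EuclideanSpace.norm_sq_eq]
    simpa [q', Real.norm_eq_abs, sq_abs, mul_pow] using key
  have := norm_image_sub_le_of_norm_deriv_le_segment_01'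
    (fun t _ => (hf t).hasDerivWithinAt) hb
  have e1 : f 1 = softmax x := by simp [f, softmax, q, S, z]
  have e0 : f 0 = softmax y := by simp [f, softmax, q, S, z]
  rwa [e1, e0] at this
end

section
/- Let B ≥ 1 and let X be a B×B real matrix with |X_{ij}| ≤ 1 for all i, j. Define (P_X)_{ij} = exp(X_{ij}) / Σ_k exp(X_{ik}) and (Q_X)_{ij} = exp(X_{ij}) / Σ_k exp(X_{kj}). Then the matrix G(X) := (1/B)·( −2·I_B + P_X + Q_X ), which is the gradient of L^M at X, satisfies ‖G(X)‖_F ≤ 2·√(2/B), where ‖·‖_F is the Frobenius norm. -/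
open scoped BigOperators
open Finset Matrix

/-- Row-softmax matrix `(P_X)_{ij} = exp(X_{ij}) / Σ_k exp(X_{ik})`. -/
noncomputable def Pmat {B : ℕ} (X : Matrix (Fin B) (Fin B) ℝ) : Matrix (Fin B) (Fin B) ℝ :=
  Matrix.of fun i j => Real.exp (X i j) / ∑ k, Real.exp (X i k)

/-- Column-softmax matrix `(Q_X)_{ij} = exp(X_{ij}) / Σ_k exp(X_{kj})`. -/
noncomputable def Qmat {B : ℕ} (X : Matrix (Fin B) (Fin B) ℝ) : Matrix (Fin B) (Fin B) ℝ :=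
  Matrix.of fun i j => Real.exp (X i j) / ∑ k, Real.exp (X k j)

/-- The gradient of `L^M` at `X`: `(1/B)·(−2·I + P_X + Q_X)`. -/
noncomputable def gradLM {B : ℕ} (X : Matrix (Fin B) (Fin B) ℝ) : Matrix (Fin B) (Fin B) ℝ :=
  (1/(B:ℝ)) • ((-2 : ℝ) • (1 : Matrix (Fin B) (Fin B) ℝ) + Pmat X + Qmat X)

/-- The Frobenius norm of a matrix. -/
noncomputable def frobNorm {m n : ℕ} (M : Matrix (Fin m) (Fin n) ℝ) : ℝ :=
  Real.sqrt (∑ i, ∑ j, (M i j)^2)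

lemma softmax_aux {B : ℕ} (x : Fin B → ℝ) (i : Fin B) :
    ∑ j, (Real.exp (x j) / ∑ k, Real.exp (x k) - (if i = j then 1 else 0)) ^ 2 ≤ 2 := by
  have hS : 0 < ∑ k, Real.exp (x k) :=
    Finset.sum_pos (fun k _ => Real.exp_pos _) ⟨i, Finset.mem_univ i⟩
  have h1 : ∑ j, Real.exp (x j) / ∑ k, Real.exp (x k) = 1 := by
    rw [← Finset.sum_div, div_self hS.ne']
  have h2 : ∑ j, (Real.exp (x j) / ∑ k, Real.exp (x k) + (if i = j then (1:ℝ) else 0)) = 2 := by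
    rw [Finset.sum_add_distrib, h1]
    simp
    norm_num
  rw [← h2]
  apply Finset.sum_le_sum
  intro j _
  have hp : 0 ≤ Real.exp (x j) / ∑ k, Real.exp (x k) := by positivity
  have hq : Real.exp (x j) / ∑ k, Real.exp (x k) ≤ 1 := by
    rw [div_le_one hS]
    exact Finset.single_le_sum (f := fun k => Real.exp (x k))
      (fun k _ => (Real.exp_pos _).le) (Finset.mem_univ j)
  split_ifs <;> nlinarith

/-- The gradient of `L^M` is bounded by `2√(2/B)` in Frobenius norm on the cube of
matrices with entries in `[−1,1]`. -/
theorem gradLM_frobNorm_le (B : ℕ) (hB : 1 ≤ B) (X : Matrix (Fin B) (Fin B) ℝ)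
    (hX : ∀ i j, |X i j| ≤ 1) :
    frobNorm (gradLM X) ≤ 2 * Real.sqrt (2 / (B:ℝ)) := by
  have hB0 : (0:ℝ) < B := by exact_mod_cast hB
  have e : 2 * Real.sqrt (2 / (B:ℝ)) = Real.sqrt (8 / (B:ℝ)) := by
    rw [show (8:ℝ) / B = 2 ^ 2 * (2 / B) by ring, Real.sqrt_mul (by norm_num),
      Real.sqrt_sq (by norm_num)]
  rw [e]
  apply Real.sqrt_le_sqrt
  have hP : ∑ i, ∑ j, (Pmat X i j - (if i = j then 1 else 0)) ^ 2 ≤ ∑ _i : Fin B, (2:ℝ) :=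
    Finset.sum_le_sum fun i _ => softmax_aux (fun j => X i j) i
  have hQ : ∑ i, ∑ j, (Qmat X i j - (if i = j then 1 else 0)) ^ 2 ≤ ∑ _i : Fin B, (2:ℝ) := by
    rw [Finset.sum_comm]
    refine Finset.sum_le_sum fun j _ => ?_
    have h := softmax_aux (fun i => X i j) j
    simpa only [Qmat, Matrix.of_apply, eq_comm] using h
  have key : ∑ i, ∑ j, (gradLM X i j) ^ 2 ≤
      (1 / (B:ℝ)) ^ 2 * (2 * ∑ i, ∑ j, (Pmat X i j - (if i = j then 1 else 0)) ^ 2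
        + 2 * ∑ i, ∑ j, (Qmat X i j - (if i = j then 1 else 0)) ^ 2) := by
    simp only [Finset.mul_sum, ← Finset.sum_add_distrib]
    refine Finset.sum_le_sum fun i _ => Finset.sum_le_sum fun j _ => ?_
    simp only [gradLM, Matrix.smul_apply, Matrix.add_apply, Matrix.one_apply, smul_eq_mul, mul_pow]
    apply mul_le_mul_of_nonneg_left _ (by positivity)
    nlinarith [sq_nonneg (Pmat X i j - Qmat X i j)]
  refine key.trans ?_
  simp only [Finset.sum_const, Finset.card_univ, Fintype.card_fin, nsmul_eq_mul] at hP hQ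
  calc _ ≤ (1 / (B:ℝ)) ^ 2 * (8 * B) := by
        apply mul_le_mul_of_nonneg_left _ (by positivity)
        linarith
    _ = 8 / B := by field_simp
end

section
/- Let B ≥ 1 and let X, Y be B×B real matrices with all entries in [−1, 1]. With G(X) := (1/B)·( −2·I_B + P_X + Q_X ) the gradient of L^M at X, one has ‖G(X) − G(Y)‖_F ≤ (2e²/B²)·‖X − Y‖_F, i.e., the gradient of L^M is (2e²/B²)-Lipschitz on [−1,1]^{B×B} in Frobenius norm, where e = exp(1). -/
open scoped BigOperators
open Finset Matrix

lemma aux_cov {ι : Type*} [Fintype ι] (p v h : ι → ℝ) (K : ℝ) (hp : ∀ i, 0 ≤ p i)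
    (hpK : ∀ i, p i ≤ K) (hs : ∑ i, p i = 1) (hK : 0 ≤ K) :
    (∑ i, p i * v i * h i - (∑ i, p i * v i) * (∑ i, p i * h i)) ^ 2
      ≤ K ^ 2 * (∑ i, v i ^ 2) * (∑ i, h i ^ 2) := by
  have expand : ∀ a b : ι → ℝ, ∑ i, p i * (a i - ∑ j, p j * a j) * (b i - ∑ j, p j * b j)
      = ∑ i, p i * a i * b i - (∑ i, p i * a i) * (∑ i, p i * b i) := by
    intro a b
    generalize hm : ∑ j, p j * a j = m
    generalize hn : ∑ j, p j * b j = n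
    have : ∀ i, p i * (a i - m) * (b i - n)
        = p i * a i * b i - (p i * a i) * n - m * (p i * b i) + p i * (m * n) := by
      intro i; ring
    simp only [this, sum_add_distrib, sum_sub_distrib, ← sum_mul, ← mul_sum, hm, hn, hs]
    ring
  have var : ∀ a : ι → ℝ, ∑ i, p i * (a i - ∑ j, p j * a j) ^ 2 ≤ K * ∑ i, a i ^ 2 := by
    intro a
    have e := expand a a
    have : ∑ i, p i * (a i - ∑ j, p j * a j) ^ 2
        = ∑ i, p i * (a i - ∑ j, p j * a j) * (a i - ∑ j, p j * a j) :=
      sum_congr rfl fun i _ => by ring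
    rw [this, e]
    have h2 : ∑ i, p i * a i * a i ≤ ∑ i, K * a i ^ 2 := by
      refine sum_le_sum fun i _ => ?_
      nlinarith [mul_le_mul_of_nonneg_right (hpK i) (sq_nonneg (a i))]
    rw [← mul_sum] at h2
    linarith [mul_self_nonneg (∑ i, p i * a i)]
  rw [← expand v h]
  have cs := Finset.sum_sq_le_sum_mul_sum_of_sq_le_mul (Finset.univ : Finset ι)
    (r := fun i => p i * (v i - ∑ j, p j * v j) * (h i - ∑ j, p j * h j))
    (f := fun i => p i * (v i - ∑ j, p j * v j) ^ 2)
    (g := fun i => p i * (h i - ∑ j, p j * h j) ^ 2)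
    (fun i _ => mul_nonneg (hp i) (sq_nonneg _)) (fun i _ => mul_nonneg (hp i) (sq_nonneg _))
    (fun i _ => le_of_eq (by ring))
  refine cs.trans ?_
  have := mul_le_mul (var v) (var h)
    (sum_nonneg fun i _ => mul_nonneg (hp i) (sq_nonneg _))
    (mul_nonneg hK (sum_nonneg fun i _ => sq_nonneg _))
  refine this.trans (le_of_eq (by ring))

lemma aux_softmax {B : ℕ} (hB : 1 ≤ B) (x y : Fin B → ℝ)
    (hx : ∀ i, x i ∈ Set.Icc (-1 : ℝ) 1) (hy : ∀ i, y i ∈ Set.Icc (-1 : ℝ) 1) :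
    ∑ j, (Real.exp (x j) / ∑ k, Real.exp (x k) - Real.exp (y j) / ∑ k, Real.exp (y k)) ^ 2
      ≤ ((Real.exp 1) ^ 2 / B) ^ 2 * ∑ j, (x j - y j) ^ 2 := by
  have hB0 : (0 : ℝ) < B := by exact_mod_cast hB
  have : Nonempty (Fin B) := ⟨⟨0, hB⟩⟩
  set v : Fin B → ℝ := fun j =>
    Real.exp (x j) / ∑ k, Real.exp (x k) - Real.exp (y j) / ∑ k, Real.exp (y k) with hv
  set h : Fin B → ℝ := fun j => x j - y j with hh
  let w : ℝ → Fin B → ℝ := fun t j => Real.exp (y j + t * h j)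
  have hD : ∀ t, 0 < ∑ k, w t k := fun t =>
    sum_pos (fun k _ => Real.exp_pos _) univ_nonempty
  have hw : ∀ t j, HasDerivAt (fun t => w t j) (w t j * h j) t := by
    intro t j
    have := (((hasDerivAt_id t).mul_const (h j)).const_add (y j)).exp
    simpa [w] using this
  have hφ : ∀ t, HasDerivAt (fun t => (∑ j, v j * w t j) / ∑ k, w t k)
      (((∑ j, v j * (w t j * h j)) * (∑ k, w t k) - (∑ j, v j * w t j) * ∑ k, w t k * h k)
        / (∑ k, w t k) ^ 2) t := by
    intro t
    exact (HasDerivAt.fun_sum fun j _ => (hw t j).const_mul (v j)).fun_div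
      (HasDerivAt.fun_sum fun j _ => hw t j) (hD t).ne'
  obtain ⟨t, ht, hmvt⟩ := exists_hasDerivAt_eq_slope _ _ (zero_lt_one (α := ℝ))
    (fun t _ => (hφ t).continuousAt.continuousWithinAt) (fun t _ => hφ t)
  have hS : (∑ j, v j * w 1 j) / ∑ k, w 1 k - (∑ j, v j * w 0 j) / ∑ k, w 0 k
      = ∑ j, v j ^ 2 := by
    rw [sum_div, sum_div, ← sum_sub_distrib]
    refine sum_congr rfl fun j _ => ?_
    simp only [w, hh, hv]
    simp only [zero_mul, one_mul, add_zero, add_sub_cancel]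
    ring
  rw [hS, sub_zero, div_one] at hmvt
  have hz : ∀ j, -1 ≤ y j + t * h j ∧ y j + t * h j ≤ 1 := by
    intro j
    obtain ⟨a, b⟩ := hx j
    obtain ⟨c, d⟩ := hy j
    obtain ⟨t0, t1⟩ := ht
    simp only [hh]
    constructor <;> nlinarith
  have hDlow : B * Real.exp (-1) ≤ ∑ k, w t k := by
    have : ∑ _k : Fin B, Real.exp (-1) ≤ ∑ k, w t k :=
      sum_le_sum fun k _ => Real.exp_le_exp.2 (hz k).1
    simpa using this
  have he : Real.exp 1 * Real.exp (-1) = 1 := by rw [← Real.exp_add]; simp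
  have hpos := Real.exp_pos 1
  have cov := aux_cov (fun j => w t j / ∑ k, w t k) v h ((Real.exp 1) ^ 2 / B)
    (fun j => div_nonneg (Real.exp_pos _).le (hD t).le)
    (fun j => by
      rw [div_le_div_iff₀ (hD t) hB0]
      have h1 : w t j ≤ Real.exp 1 := Real.exp_le_exp.2 (hz j).2
      calc w t j * B ≤ Real.exp 1 * B := by gcongr
        _ = Real.exp 1 ^ 2 * (B * Real.exp (-1)) := by linear_combination (-Real.exp 1 * B) * he
        _ ≤ _ := by gcongr)
    (by rw [← sum_div, div_self (hD t).ne']) (by positivity)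
  have heq : ∑ i, w t i / (∑ k, w t k) * v i * h i
      - (∑ i, w t i / (∑ k, w t k) * v i) * (∑ i, w t i / (∑ k, w t k) * h i)
      = ∑ j, v j ^ 2 := by
    rw [← hmvt]
    have hne := (hD t).ne'
    have e1 : ∑ i, w t i / (∑ k, w t k) * v i * h i
        = (∑ j, v j * (w t j * h j)) / ∑ k, w t k := by
      rw [sum_div]; exact sum_congr rfl fun i _ => by ring
    have e2 : ∑ i, w t i / (∑ k, w t k) * v i = (∑ j, v j * w t j) / ∑ k, w t k := by
      rw [sum_div]; exact sum_congr rfl fun i _ => by ring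
    have e3 : ∑ i, w t i / (∑ k, w t k) * h i = (∑ j, w t j * h j) / ∑ k, w t k := by
      rw [sum_div]; exact sum_congr rfl fun i _ => by ring
    rw [e1, e2, e3]
    field_simp
  rw [heq] at cov
  change ∑ j, v j ^ 2 ≤ _ * ∑ j, h j ^ 2
  have hS0 : 0 ≤ ∑ j, v j ^ 2 := sum_nonneg fun i _ => sq_nonneg _
  have hH0 : 0 ≤ ∑ j, h j ^ 2 := sum_nonneg fun i _ => sq_nonneg _
  rcases hS0.eq_or_lt with h0 | h0
  · rw [← h0]; positivity
  · refine le_of_mul_le_mul_left ?_ h0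
    linarith

/-- The gradient of `L^M` is `(2e²/B²)`-Lipschitz in Frobenius norm on the cube of
matrices with entries in `[−1,1]`. -/
theorem gradLM_lipschitz (B : ℕ) (hB : 1 ≤ B) (X Y : Matrix (Fin B) (Fin B) ℝ)
    (hX : ∀ i j, X i j ∈ Set.Icc (-1 : ℝ) 1) (hY : ∀ i j, Y i j ∈ Set.Icc (-1 : ℝ) 1) :
    frobNorm (gradLM X - gradLM Y)
      ≤ 2 * (Real.exp 1)^2 / (B:ℝ)^2 * frobNorm (X - Y) := by
  have hB0 : (0 : ℝ) < B := by exact_mod_cast hB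
  have hP : ∑ i, ∑ j, (Pmat X i j - Pmat Y i j) ^ 2
      ≤ ((Real.exp 1) ^ 2 / B) ^ 2 * ∑ i, ∑ j, (X i j - Y i j) ^ 2 := by
    rw [mul_sum]
    exact sum_le_sum fun i _ => aux_softmax hB (X i) (Y i) (hX i) (hY i)
  have hQ : ∑ i, ∑ j, (Qmat X i j - Qmat Y i j) ^ 2
      ≤ ((Real.exp 1) ^ 2 / B) ^ 2 * ∑ i, ∑ j, (X i j - Y i j) ^ 2 := by
    rw [sum_comm, sum_comm (f := fun i j => (X i j - Y i j) ^ 2), mul_sum]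
    exact sum_le_sum fun j _ => aux_softmax hB (fun i => X i j) (fun i => Y i j)
      (fun i => hX i j) (fun i => hY i j)
  unfold frobNorm
  rw [Real.sqrt_le_left (by positivity), mul_pow, Real.sq_sqrt (by positivity)]
  have key : ∑ i, ∑ j, ((gradLM X - gradLM Y) i j) ^ 2
      ≤ (1 / (B:ℝ)) ^ 2 * (2 * ∑ i, ∑ j, (Pmat X i j - Pmat Y i j) ^ 2
        + 2 * ∑ i, ∑ j, (Qmat X i j - Qmat Y i j) ^ 2) := by
    simp only [mul_sum, ← sum_add_distrib]
    refine sum_le_sum fun i _ => sum_le_sum fun j _ => ?_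
    have : (gradLM X - gradLM Y) i j
        = (1 / (B:ℝ)) * ((Pmat X i j - Pmat Y i j) + (Qmat X i j - Qmat Y i j)) := by
      simp only [gradLM, Matrix.sub_apply, Matrix.smul_apply, Matrix.add_apply, smul_eq_mul]
      ring
    rw [this, mul_pow]
    refine mul_le_mul_of_nonneg_left ?_ (sq_nonneg _)
    nlinarith [sq_nonneg ((Pmat X i j - Pmat Y i j) - (Qmat X i j - Qmat Y i j))]
  refine key.trans ?_
  simp only [Matrix.sub_apply]
  calc _ ≤ (1 / (B:ℝ)) ^ 2 * (2 * (((Real.exp 1) ^ 2 / B) ^ 2 * ∑ i, ∑ j, (X i j - Y i j) ^ 2)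
        + 2 * (((Real.exp 1) ^ 2 / B) ^ 2 * ∑ i, ∑ j, (X i j - Y i j) ^ 2)) := by gcongr
    _ = _ := by ring
end

section
/- Let B ≥ 1, d ≥ 1 and let U, V be d×B real matrices each of whose columns has Euclidean norm at most 1. Let G = (1/B)·( −2·I_B + P_{UᵀV} + Q_{UᵀV} ) be the gradient of L^M at the matrix UᵀV. Then the gradient of the mini-batch contrastive loss (U,V) ↦ L^M(UᵀV), given by the pair ( V·Gᵀ, U·G ), satisfies √( ‖V·Gᵀ‖_F² + ‖U·G‖_F² ) ≤ 4. -/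
open scoped BigOperators
open Finset Matrix

theorem aux_soft {B : ℕ} (f : Fin B → ℝ) (j : Fin B) :
    0 ≤ Real.exp (f j) / ∑ k, Real.exp (f k) ∧ Real.exp (f j) / ∑ k, Real.exp (f k) ≤ 1 ∧
    ∑ i, Real.exp (f i) / ∑ k, Real.exp (f k) = 1 := by
  have hle : Real.exp (f j) ≤ ∑ k, Real.exp (f k) :=
    Finset.single_le_sum (f := fun k => Real.exp (f k)) (fun k _ => (Real.exp_pos _).le)
      (Finset.mem_univ j)
  have hpos : 0 < ∑ k, Real.exp (f k) := lt_of_lt_of_le (Real.exp_pos _) hle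
  refine ⟨by positivity, (div_le_one hpos).2 hle, ?_⟩
  rw [← Finset.sum_div, div_self hpos.ne']

theorem aux_grad {B : ℕ} (hB : 1 ≤ B) (X : Matrix (Fin B) (Fin B) ℝ) :
    (B : ℝ) * ∑ i, ∑ j, (gradLM X i j)^2 ≤ 8 := by
  have hB0 : (0:ℝ) < B := by exact_mod_cast hB
  have h1 : ∀ i j, (gradLM X i j)^2 ≤ (1/(B:ℝ))^2 * (2 * (Pmat X i j + Qmat X i j
      + 2 * (1 : Matrix (Fin B) (Fin B) ℝ) i j)) := by
    intro i j
    obtain ⟨p0, p1, -⟩ := aux_soft (fun k => X i k) j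
    obtain ⟨q0, q1, -⟩ := aux_soft (fun k => X k j) i
    change 0 ≤ Pmat X i j at p0
    change Pmat X i j ≤ 1 at p1
    change 0 ≤ Qmat X i j at q0
    change Qmat X i j ≤ 1 at q1
    have e : gradLM X i j = (1/(B:ℝ)) * (-2 * (1 : Matrix (Fin B) (Fin B) ℝ) i j
        + Pmat X i j + Qmat X i j) := by
      simp [gradLM]
    rw [e, mul_pow]
    apply mul_le_mul_of_nonneg_left _ (by positivity)
    generalize Pmat X i j = p at *
    generalize Qmat X i j = q at *
    by_cases hij : i = j
    · subst hij
      rw [Matrix.one_apply_eq]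
      nlinarith [sq_nonneg (p - q)]
    · rw [Matrix.one_apply_ne hij]
      nlinarith [sq_nonneg (p - q)]
  have hP : ∑ i, ∑ j, Pmat X i j = B := by
    have : ∀ i, ∑ j, Pmat X i j = 1 := fun i => (aux_soft (fun k => X i k) i).2.2
    simp [this]
  have hQ : ∑ i, ∑ j, Qmat X i j = B := by
    refine Finset.sum_comm.trans ?_
    have : ∀ j, ∑ i, Qmat X i j = 1 := fun j => (aux_soft (fun k => X k j) j).2.2
    simp [this]
  have hI : ∑ i, ∑ j, (1 : Matrix (Fin B) (Fin B) ℝ) i j = B := by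
    simp [Matrix.one_apply]
  have h2 := Finset.sum_le_sum (s := Finset.univ) fun i _ =>
    Finset.sum_le_sum (s := Finset.univ) fun j _ => h1 i j
  simp only [← Finset.mul_sum, Finset.sum_add_distrib, hP, hQ, hI] at h2
  calc (B : ℝ) * ∑ i, ∑ j, (gradLM X i j)^2 ≤ B * ((1/(B:ℝ))^2 * (2 * (B + B + 2 * B))) :=
        mul_le_mul_of_nonneg_left h2 hB0.le
    _ = 8 := by field_simp; norm_num

theorem aux_mul {d B : ℕ} (V : Matrix (Fin d) (Fin B) ℝ) (G : Matrix (Fin B) (Fin B) ℝ)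
    (hV : ∀ j, Real.sqrt (∑ i, (V i j)^2) ≤ 1) :
    frobNorm (V * G)^2 ≤ B * ∑ i, ∑ j, (G i j)^2 := by
  unfold frobNorm
  rw [Real.sq_sqrt (by positivity)]
  have hV2 : ∑ i, ∑ k, (V i k)^2 ≤ B := by
    rw [Finset.sum_comm]
    have : ∀ j, ∑ i, (V i j)^2 ≤ 1 := fun j => by
      simpa using (Real.sqrt_le_left (by norm_num)).1 (hV j)
    simpa using Finset.sum_le_sum (s := Finset.univ) fun j _ => this j
  calc ∑ i, ∑ j, ((V * G) i j)^2
      ≤ ∑ i, ∑ j, (∑ k, (V i k)^2) * ∑ k, (G k j)^2 := by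
        refine Finset.sum_le_sum fun i _ => Finset.sum_le_sum fun j _ => ?_
        rw [Matrix.mul_apply]
        exact Finset.sum_mul_sq_le_sq_mul_sq _ _ _
    _ = (∑ i, ∑ k, (V i k)^2) * ∑ i, ∑ j, (G i j)^2 := by
        rw [Finset.sum_comm (f := fun i j => (G i j)^2)]
        simp only [← Finset.mul_sum, ← Finset.sum_mul]
    _ ≤ _ := mul_le_mul_of_nonneg_right hV2 (by positivity)

/-- The gradient of the mini-batch contrastive loss `(U,V) ↦ L^M(UᵀV)`, namely
`(V·Gᵀ, U·G)` with `G = ∇L^M(UᵀV)`, has norm at most 4 when all columns of `U` and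
`V` lie in the closed unit ball. -/
theorem miniBatch_grad_norm_le_four (B d : ℕ) (hB : 1 ≤ B) (hd : 1 ≤ d)
    (U V : Matrix (Fin d) (Fin B) ℝ)
    (hU : ∀ j, Real.sqrt (∑ i, (U i j)^2) ≤ 1)
    (hV : ∀ j, Real.sqrt (∑ i, (V i j)^2) ≤ 1) :
    Real.sqrt (frobNorm (V * (gradLM (Uᵀ * V))ᵀ)^2 + frobNorm (U * gradLM (Uᵀ * V))^2)
      ≤ 4 := by
  have hG := aux_grad hB (Uᵀ * V)
  have h1 := aux_mul U (gradLM (Uᵀ * V)) hU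
  have h2 := aux_mul V (gradLM (Uᵀ * V))ᵀ hV
  simp only [Matrix.transpose_apply] at h2
  rw [Finset.sum_comm] at h2
  rw [Real.sqrt_le_left (by norm_num)]
  linarith
end

section
/- Let B ≥ 1, d ≥ 1 and let U¹, V¹, U², V² be d×B real matrices each of whose columns has Euclidean norm at most 1. For i = 1, 2 let G_i = (1/B)·( −2·I_B + P_{(Uⁱ)ᵀVⁱ} + Q_{(Uⁱ)ᵀVⁱ} ) be the gradient of L^M at (Uⁱ)ᵀVⁱ. Then √( ‖V¹·G₁ᵀ − V²·G₂ᵀ‖_F² + ‖U¹·G₁ − U²·G₂‖_F² ) ≤ ρ₀ · √( ‖U¹ − U²‖_F² + ‖V¹ − V²‖_F² ), where ρ₀ = 2·√(2/B) + 4e²/B and e = exp(1); i.e., the gradient of the mini-batch contrastive loss (U,V) ↦ L^M(UᵀV) is ρ₀-Lipschitz on configurations whose columns lie in the closed unit ball. -/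
open scoped BigOperators
open Finset Matrix

/-- Softmax of a vector. -/
noncomputable def smax {B : ℕ} (x : Fin B → ℝ) (j : Fin B) : ℝ :=
  Real.exp (x j) / ∑ k, Real.exp (x k)

lemma smax_den_pos {B : ℕ} (hB : 1 ≤ B) (x : Fin B → ℝ) : 0 < ∑ k, Real.exp (x k) :=
  Finset.sum_pos (fun _ _ => Real.exp_pos _) ⟨⟨0, hB⟩, Finset.mem_univ _⟩

lemma smax_nonneg {B : ℕ} (x : Fin B → ℝ) (j : Fin B) : 0 ≤ smax x j :=
  div_nonneg (Real.exp_pos _).le (Finset.sum_nonneg fun _ _ => (Real.exp_pos _).le)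

lemma smax_sum {B : ℕ} (hB : 1 ≤ B) (x : Fin B → ℝ) : ∑ j, smax x j = 1 := by
  unfold smax
  rw [← Finset.sum_div, div_self (smax_den_pos hB x).ne']

lemma smax_le {B : ℕ} (hB : 1 ≤ B) (x : Fin B → ℝ) (hx : ∀ j, |x j| ≤ 1) (j : Fin B) :
    smax x j ≤ Real.exp 1 ^ 2 / B := by
  have hB' : (0:ℝ) < B := by exact_mod_cast hB
  unfold smax
  rw [div_le_div_iff₀ (smax_den_pos hB x) hB']
  have h1 : Real.exp (x j) ≤ Real.exp 1 := Real.exp_le_exp.2 (abs_le.1 (hx j)).2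
  have h2 : (B:ℝ) * Real.exp (-1) ≤ ∑ k, Real.exp (x k) := by
    have : ∑ k : Fin B, Real.exp (-1) ≤ ∑ k, Real.exp (x k) :=
      Finset.sum_le_sum fun k _ => Real.exp_le_exp.2 (abs_le.1 (hx k)).1
    simpa using this
  have h3 : Real.exp 1 * Real.exp (-1) = 1 := by rw [← Real.exp_add]; simp
  have he := Real.exp_pos 1
  calc Real.exp (x j) * B ≤ Real.exp 1 * B := by gcongr
    _ = Real.exp 1 ^ 2 * (B * Real.exp (-1)) := by linear_combination (-(B:ℝ) * Real.exp 1) * h3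
    _ ≤ _ := by gcongr

lemma cov_bound {B : ℕ} (p w h : Fin B → ℝ) (K : ℝ) (hp : ∀ i, 0 ≤ p i) (hs : ∑ i, p i = 1)
    (hK : ∀ i, p i ≤ K) (hK0 : 0 < K) :
    2 * ∑ i, w i * (p i * (h i - ∑ k, p k * h k)) ≤ ∑ i, w i ^ 2 + K ^ 2 * ∑ i, h i ^ 2 := by
  set a := ∑ i, p i * w i with ha
  set b := ∑ i, p i * h i with hb
  have e1 : ∑ i, w i * (p i * (h i - b)) = ∑ i, p i * (w i * h i) - a * b := by
    rw [ha, Finset.sum_mul, ← Finset.sum_sub_distrib]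
    exact Finset.sum_congr rfl fun i _ => by ring
  have e2 : 0 ≤ ∑ i, p i * (w i - K * h i - (a - K * b)) ^ 2 :=
    Finset.sum_nonneg fun i _ => mul_nonneg (hp i) (sq_nonneg _)
  have e3 : ∑ i, p i * (w i - K * h i - (a - K * b)) ^ 2
      = ∑ i, p i * w i ^ 2 + K ^ 2 * ∑ i, p i * h i ^ 2 - 2 * K * ∑ i, p i * (w i * h i)
        - (a - K * b) ^ 2 := by
    have : ∑ i, p i * (w i - K * h i - (a - K * b)) ^ 2
      = ∑ i, p i * w i ^ 2 + K ^ 2 * ∑ i, p i * h i ^ 2 - 2 * K * ∑ i, p i * (w i * h i)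
        - 2 * (a - K * b) * (∑ i, p i * w i) + 2 * (a - K * b) * K * (∑ i, p i * h i)
        + (a - K * b) ^ 2 * ∑ i, p i := by
      simp only [Finset.mul_sum, ← Finset.sum_sub_distrib, ← Finset.sum_add_distrib]
      exact Finset.sum_congr rfl fun i _ => by ring
    rw [this, hs, ← ha, ← hb]; ring
  have e4 : ∑ i, p i * w i ^ 2 ≤ K * ∑ i, w i ^ 2 := by
    rw [Finset.mul_sum]
    exact Finset.sum_le_sum fun i _ => mul_le_mul_of_nonneg_right (hK i) (sq_nonneg _)
  have e5 : ∑ i, p i * h i ^ 2 ≤ K * ∑ i, h i ^ 2 := by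
    rw [Finset.mul_sum]
    exact Finset.sum_le_sum fun i _ => mul_le_mul_of_nonneg_right (hK i) (sq_nonneg _)
  rw [e1]
  have e6 : K ^ 2 * ∑ i, p i * h i ^ 2 ≤ K ^ 2 * (K * ∑ i, h i ^ 2) := by gcongr
  refine le_of_mul_le_mul_left ?_ hK0
  nlinarith [sq_nonneg a, sq_nonneg (K * b)]

lemma smax_lip {B : ℕ} (hB : 1 ≤ B) (x y : Fin B → ℝ) (hx : ∀ j, |x j| ≤ 1)
    (hy : ∀ j, |y j| ≤ 1) :
    ∑ j, (smax x j - smax y j) ^ 2 ≤ (Real.exp 1 ^ 2 / B) ^ 2 * ∑ j, (x j - y j) ^ 2 := by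
  have hB' : (0:ℝ) < B := by exact_mod_cast hB
  set K := Real.exp 1 ^ 2 / (B:ℝ) with hKdef
  have hK0 : 0 < K := by positivity
  set w : Fin B → ℝ := fun j => smax x j - smax y j with hw
  set h : Fin B → ℝ := fun j => x j - y j with hh
  let z : ℝ → Fin B → ℝ := fun t j => y j + t * h j
  let φ : ℝ → ℝ := fun t => ∑ j, w j * smax (z t) j
  let φ' : ℝ → ℝ := fun t =>
    ∑ j, w j * (smax (z t) j * (h j - ∑ k, smax (z t) k * h k))
  have hd : ∀ t, HasDerivAt φ (φ' t) t := by
    intro t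
    have hz : ∀ j, HasDerivAt (fun t => Real.exp (z t j)) (Real.exp (z t j) * h j) t := by
      intro j
      have : HasDerivAt (fun t => z t j) (h j) t := by
        have := ((hasDerivAt_id t).mul_const (h j)).const_add (y j)
        rw [one_mul] at this
        exact this
      exact this.exp
    have hS : HasDerivAt (fun t => ∑ k, Real.exp (z t k)) (∑ k, Real.exp (z t k) * h k) t :=
      HasDerivAt.fun_sum fun k _ => hz k
    have hpos := smax_den_pos hB (z t)
    refine HasDerivAt.fun_sum fun j _ => HasDerivAt.const_mul (w j) ?_
    have := (hz j).fun_div hS hpos.ne'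
    refine this.congr_deriv ?_
    have e : ∑ k, smax (z t) k * h k
        = (∑ k, Real.exp (z t k) * h k) / ∑ k, Real.exp (z t k) := by
      rw [Finset.sum_div]
      exact Finset.sum_congr rfl fun k _ => by unfold smax; ring
    rw [e]; unfold smax
    field_simp
  obtain ⟨c, hc, hc'⟩ := exists_hasDerivAt_eq_slope φ φ' (zero_lt_one)
    (fun t _ => (hd t).continuousAt.continuousWithinAt) (fun t _ => hd t)
  have h1 : φ 1 - φ 0 = ∑ j, w j ^ 2 := by
    have z1 : z 1 = x := by funext j; simp [z, hh]
    have z0 : z 0 = y := by funext j; simp [z]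
    simp only [φ, z1, z0, ← Finset.sum_sub_distrib]
    exact Finset.sum_congr rfl fun j _ => by simp only [hw]; ring
  have hzb : ∀ j, |z c j| ≤ 1 := by
    intro j
    have := abs_le.1 (hx j)
    have := abs_le.1 (hy j)
    obtain ⟨c0, c1⟩ := hc
    simp only [z, hh]
    rw [abs_le]
    constructor <;> nlinarith
  have := cov_bound (smax (z c)) w h K (smax_nonneg _) (smax_sum hB _) (smax_le hB _ hzb) hK0
  have h2 : φ' c = ∑ j, w j ^ 2 := by rw [hc', h1]; simp
  change 2 * φ' c ≤ _ at this
  linarith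

attribute [local instance] Matrix.frobeniusNormedAddCommGroup Matrix.frobeniusNormedSpace

lemma frobNorm_eq {m n : ℕ} (M : Matrix (Fin m) (Fin n) ℝ) : frobNorm M = ‖M‖ := by
  rw [Matrix.frobenius_norm_def, frobNorm, Real.sqrt_eq_rpow]
  simp

lemma frob_sq {m n : ℕ} (M : Matrix (Fin m) (Fin n) ℝ) : ‖M‖ ^ 2 = ∑ i, ∑ j, (M i j) ^ 2 := by
  rw [← frobNorm_eq, frobNorm, Real.sq_sqrt]
  positivity

lemma norm_cols {m n : ℕ} (M : Matrix (Fin m) (Fin n) ℝ)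
    (h : ∀ j, Real.sqrt (∑ i, (M i j)^2) ≤ 1) : ‖M‖ ≤ Real.sqrt n := by
  apply Real.le_sqrt_of_sq_le
  rw [frob_sq, Finset.sum_comm]
  calc _ ≤ ∑ j : Fin n, (1:ℝ) := Finset.sum_le_sum fun j _ => by
        have := h j
        simpa using Real.sqrt_le_iff.1 this
    _ = n := by simp

lemma entry_bound {d B : ℕ} (U V : Matrix (Fin d) (Fin B) ℝ)
    (hU : ∀ j, Real.sqrt (∑ i, (U i j)^2) ≤ 1)
    (hV : ∀ j, Real.sqrt (∑ i, (V i j)^2) ≤ 1) (i j : Fin B) : |(Uᵀ * V) i j| ≤ 1 := by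
  have h1 := hU i
  have h2 := hV j
  replace h1 : ∑ k, U k i ^ 2 ≤ (1:ℝ) := by simpa using Real.sqrt_le_iff.1 h1
  replace h2 : ∑ k, V k j ^ 2 ≤ (1:ℝ) := by simpa using Real.sqrt_le_iff.1 h2
  rw [Matrix.mul_apply, ← sq_le_one_iff_abs_le_one]
  have := Finset.sum_mul_sq_le_sq_mul_sq Finset.univ (fun k => U k i) (fun k => V k j)
  simp only [Matrix.transpose_apply]
  refine this.trans (mul_le_one₀ h1 (by positivity) h2)

lemma Pmat_apply {B : ℕ} (X : Matrix (Fin B) (Fin B) ℝ) (i j) : Pmat X i j = smax (X i) j := rfl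

lemma Qmat_eq {B : ℕ} (X : Matrix (Fin B) (Fin B) ℝ) : Qmat X = (Pmat Xᵀ)ᵀ := rfl

lemma P_lip {B : ℕ} (hB : 1 ≤ B) (X Y : Matrix (Fin B) (Fin B) ℝ)
    (hX : ∀ i j, |X i j| ≤ 1) (hY : ∀ i j, |Y i j| ≤ 1) :
    ‖Pmat X - Pmat Y‖ ≤ Real.exp 1 ^ 2 / B * ‖X - Y‖ := by
  refine (sq_le_sq₀ (norm_nonneg _) (by positivity)).1 ?_
  rw [mul_pow, frob_sq, frob_sq, Finset.mul_sum]
  exact Finset.sum_le_sum fun i _ => smax_lip hB (X i) (Y i) (hX i) (hY i)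

lemma Q_lip {B : ℕ} (hB : 1 ≤ B) (X Y : Matrix (Fin B) (Fin B) ℝ)
    (hX : ∀ i j, |X i j| ≤ 1) (hY : ∀ i j, |Y i j| ≤ 1) :
    ‖Qmat X - Qmat Y‖ ≤ Real.exp 1 ^ 2 / B * ‖X - Y‖ := by
  have := P_lip hB Xᵀ Yᵀ (fun i j => hX j i) (fun i j => hY j i)
  rwa [← Matrix.transpose_sub, Matrix.frobenius_norm_transpose,
    ← Matrix.frobenius_norm_transpose (Pmat Xᵀ - Pmat Yᵀ)] at this

lemma P_norm {B : ℕ} (hB : 1 ≤ B) (X : Matrix (Fin B) (Fin B) ℝ) :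
    ‖Pmat X - 1‖ ≤ Real.sqrt (2 * B) := by
  apply Real.le_sqrt_of_sq_le
  rw [frob_sq]
  calc _ ≤ ∑ i : Fin B, (2:ℝ) := Finset.sum_le_sum fun i _ => ?_
    _ = 2 * B := by simp [mul_comm]
  have hs := smax_sum hB (X i)
  have h1 : ∀ j, smax (X i) j ≤ 1 := fun j => by
    rw [← hs]; exact Finset.single_le_sum (fun k _ => smax_nonneg (X i) k) (Finset.mem_univ j)
  have : ∀ j, ((Pmat X - 1) i j) ^ 2 ≤ smax (X i) j + (1 : Matrix (Fin B) (Fin B) ℝ) i j := by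
    intro j
    rw [Matrix.sub_apply, Pmat_apply]
    have := h1 j
    have := smax_nonneg (X i) j
    by_cases hij : i = j
    · subst hij; rw [Matrix.one_apply_eq]; nlinarith
    · rw [Matrix.one_apply_ne hij]; nlinarith
  calc _ ≤ ∑ j, (smax (X i) j + (1 : Matrix (Fin B) (Fin B) ℝ) i j) :=
        Finset.sum_le_sum fun j _ => this j
    _ = 2 := by rw [Finset.sum_add_distrib, hs]; simp [Matrix.one_apply]; norm_num

lemma Q_norm {B : ℕ} (hB : 1 ≤ B) (X : Matrix (Fin B) (Fin B) ℝ) :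
    ‖Qmat X - 1‖ ≤ Real.sqrt (2 * B) := by
  have := P_norm hB Xᵀ
  rwa [← Matrix.frobenius_norm_transpose, Matrix.transpose_sub, Matrix.transpose_one] at this

lemma G_norm {B : ℕ} (hB : 1 ≤ B) (X : Matrix (Fin B) (Fin B) ℝ) :
    ‖gradLM X‖ ≤ 2 * Real.sqrt (2 / B) := by
  have hB' : (0:ℝ) < B := by exact_mod_cast hB
  have e : gradLM X = (1/(B:ℝ)) • ((Pmat X - 1) + (Qmat X - 1)) := by
    unfold gradLM; congr 1; module
  have e2 : Real.sqrt (2 * B) = B * Real.sqrt (2 / B) := by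
    rw [← Real.sqrt_sq hB'.le, ← Real.sqrt_mul (by positivity), Real.sqrt_sq hB'.le]
    congr 1; field_simp
  rw [e, norm_smul, Real.norm_of_nonneg (by positivity), one_div, inv_mul_le_iff₀ hB']
  calc _ ≤ _ := norm_add_le _ _
    _ ≤ _ := add_le_add (P_norm hB X) (Q_norm hB X)
    _ = _ := by rw [e2]; ring

lemma G_lip {B : ℕ} (hB : 1 ≤ B) (X Y : Matrix (Fin B) (Fin B) ℝ)
    (hX : ∀ i j, |X i j| ≤ 1) (hY : ∀ i j, |Y i j| ≤ 1) :
    ‖gradLM X - gradLM Y‖ ≤ 2 * Real.exp 1 ^ 2 / B ^ 2 * ‖X - Y‖ := by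
  have hB' : (0:ℝ) < B := by exact_mod_cast hB
  have e : gradLM X - gradLM Y
      = (1/(B:ℝ)) • ((Pmat X - Pmat Y) + (Qmat X - Qmat Y)) := by
    unfold gradLM; rw [← smul_sub]; congr 1; module
  rw [e, norm_smul, Real.norm_of_nonneg (by positivity), one_div, inv_mul_le_iff₀ hB']
  calc _ ≤ _ := norm_add_le _ _
    _ ≤ _ := add_le_add (P_lip hB X Y hX hY) (Q_lip hB X Y hX hY)
    _ = _ := by field_simp; ring

/-- The gradient of the mini-batch contrastive loss `(U,V) ↦ L^M(UᵀV)` is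
`ρ₀`-Lipschitz, `ρ₀ = 2√(2/B) + 4e²/B`, on configurations whose columns lie in the
closed unit ball. -/
theorem miniBatch_grad_lipschitz (B d : ℕ) (hB : 1 ≤ B) (hd : 1 ≤ d)
    (U₁ V₁ U₂ V₂ : Matrix (Fin d) (Fin B) ℝ)
    (hU₁ : ∀ j, Real.sqrt (∑ i, (U₁ i j)^2) ≤ 1)
    (hV₁ : ∀ j, Real.sqrt (∑ i, (V₁ i j)^2) ≤ 1)
    (hU₂ : ∀ j, Real.sqrt (∑ i, (U₂ i j)^2) ≤ 1)
    (hV₂ : ∀ j, Real.sqrt (∑ i, (V₂ i j)^2) ≤ 1) :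
    Real.sqrt
        (frobNorm (V₁ * (gradLM (U₁ᵀ * V₁))ᵀ - V₂ * (gradLM (U₂ᵀ * V₂))ᵀ)^2
          + frobNorm (U₁ * gradLM (U₁ᵀ * V₁) - U₂ * gradLM (U₂ᵀ * V₂))^2)
      ≤ (2 * Real.sqrt (2 / (B:ℝ)) + 4 * (Real.exp 1)^2 / (B:ℝ))
          * Real.sqrt (frobNorm (U₁ - U₂)^2 + frobNorm (V₁ - V₂)^2) := by
  have hB' : (0:ℝ) < B := by exact_mod_cast hB
  simp only [frobNorm_eq]
  have hX₁ := entry_bound U₁ V₁ hU₁ hV₁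
  have hX₂ := entry_bound U₂ V₂ hU₂ hV₂
  have hG := G_norm hB (U₁ᵀ * V₁)
  have hL := G_lip hB _ _ hX₁ hX₂
  have hdX : ‖U₁ᵀ * V₁ - U₂ᵀ * V₂‖ ≤ Real.sqrt B * (‖U₁ - U₂‖ + ‖V₁ - V₂‖) := by
    have e : U₁ᵀ * V₁ - U₂ᵀ * V₂ = (U₁ - U₂)ᵀ * V₂ + U₁ᵀ * (V₁ - V₂) := by
      rw [Matrix.transpose_sub, Matrix.sub_mul, Matrix.mul_sub]; abel
    rw [e]
    have n1 := Matrix.frobenius_norm_mul (U₁ - U₂)ᵀ V₂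
    have n2 := Matrix.frobenius_norm_mul U₁ᵀ (V₁ - V₂)
    rw [Matrix.frobenius_norm_transpose] at n1 n2
    have m1 := mul_le_mul_of_nonneg_left (norm_cols V₂ hV₂) (norm_nonneg (U₁ - U₂))
    have m2 := mul_le_mul_of_nonneg_right (norm_cols U₁ hU₁) (norm_nonneg (V₁ - V₂))
    have := norm_add_le ((U₁ - U₂)ᵀ * V₂) (U₁ᵀ * (V₁ - V₂))
    linarith
  set G₁ := gradLM (U₁ᵀ * V₁)
  set G₂ := gradLM (U₂ᵀ * V₂)
  set g := 2 * Real.sqrt (2 / (B:ℝ)) with hg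
  have hg0 : 0 ≤ g := by positivity
  set k := 4 * (Real.exp 1)^2 / (B:ℝ) with hk
  have hk0 : 0 ≤ k := by positivity
  set u := ‖U₁ - U₂‖
  set v := ‖V₁ - V₂‖
  have hu : 0 ≤ u := norm_nonneg _
  have hv : 0 ≤ v := norm_nonneg _
  have hs : Real.sqrt B * ‖G₁ - G₂‖ ≤ k / 2 * (u + v) := by
    calc Real.sqrt B * ‖G₁ - G₂‖
        ≤ Real.sqrt B * (2 * Real.exp 1 ^ 2 / B ^ 2 * (Real.sqrt B * (u + v))) := by
          refine mul_le_mul_of_nonneg_left (hL.trans ?_) (Real.sqrt_nonneg _)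
          exact mul_le_mul_of_nonneg_left hdX (by positivity)
      _ = (Real.sqrt B * Real.sqrt B) * (2 * Real.exp 1 ^ 2 / B ^ 2 * (u + v)) := by ring
      _ = _ := by rw [Real.mul_self_sqrt hB'.le, hk]; field_simp; ring
  have hA : ‖V₁ * G₁ᵀ - V₂ * G₂ᵀ‖ ≤ g * v + k / 2 * (u + v) := by
    have e : V₁ * G₁ᵀ - V₂ * G₂ᵀ = (V₁ - V₂) * G₁ᵀ + V₂ * (G₁ - G₂)ᵀ := by
      rw [Matrix.transpose_sub, Matrix.sub_mul, Matrix.mul_sub]; abel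
    rw [e]
    have n1 := Matrix.frobenius_norm_mul (V₁ - V₂) G₁ᵀ
    have n2 := Matrix.frobenius_norm_mul V₂ (G₁ - G₂)ᵀ
    rw [Matrix.frobenius_norm_transpose] at n1 n2
    have m1 := mul_le_mul_of_nonneg_left hG hv
    have m2 := mul_le_mul_of_nonneg_right (norm_cols V₂ hV₂) (norm_nonneg (G₁ - G₂))
    have := norm_add_le ((V₁ - V₂) * G₁ᵀ) (V₂ * (G₁ - G₂)ᵀ)
    linarith
  have hC : ‖U₁ * G₁ - U₂ * G₂‖ ≤ g * u + k / 2 * (u + v) := by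
    have e : U₁ * G₁ - U₂ * G₂ = (U₁ - U₂) * G₁ + U₂ * (G₁ - G₂) := by
      rw [Matrix.sub_mul, Matrix.mul_sub]; abel
    rw [e]
    have n1 := Matrix.frobenius_norm_mul (U₁ - U₂) G₁
    have n2 := Matrix.frobenius_norm_mul U₂ (G₁ - G₂)
    have m1 := mul_le_mul_of_nonneg_left hG hu
    have m2 := mul_le_mul_of_nonneg_right (norm_cols U₂ hU₂) (norm_nonneg (G₁ - G₂))
    have := norm_add_le ((U₁ - U₂) * G₁) (U₂ * (G₁ - G₂))
    linarith
  apply Real.sqrt_le_iff.2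
  refine ⟨by positivity, ?_⟩
  rw [mul_pow, Real.sq_sqrt (by positivity)]
  have q1 := pow_le_pow_left₀ (norm_nonneg _) hA 2
  have q2 := pow_le_pow_left₀ (norm_nonneg _) hC 2
  have q3 : 0 ≤ (g * k + k ^ 2 / 2) * (u - v) ^ 2 := by positivity
  refine (add_le_add q1 q2).trans ?_
  nlinarith
end
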